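/- arXiv:2505.01611 — 4 statements merged into one kernel-verified Lean document; each statement's English description precedes it below -/
import Mathlib

section
/- Let u ∈ 𝒰_Ω, let [c, d] be the orthogonal projection of Ω onto the y-axis, and for y ∈ [c, d] let m(y) = max{u(x, y) : (x, y) ∈ Ω}. Then ‖u_x‖₁ = ∫_c^d 2 m(y) dy. -/
open Set MeasureTheory
open scoped ENNReal

/-- Partial derivative of `u` in the `x` direction (junk value where `u` is not
differentiable). -/
noncomputable def ux (u : ℝ × ℝ → ℝ) (z : ℝ × ℝ) : ℝ := fderiv ℝ u z (1, 0)

/-- Partial derivative of `u` in the `y` direction. -/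
noncomputable def uy (u : ℝ × ℝ → ℝ) (z : ℝ × ℝ) : ℝ := fderiv ℝ u z (0, 1)

/-- Directional derivative of `u` in the direction `h`. -/
noncomputable def uh (h : ℝ × ℝ) (u : ℝ × ℝ → ℝ) (z : ℝ × ℝ) : ℝ := fderiv ℝ u z h

/-- The class `𝒰_Ω`: continuous concave functions on `Ω` vanishing on the boundary,
with uniformly bounded gradient over all interior points where it exists. -/
def MemU (Ω : Set (ℝ × ℝ)) (u : ℝ × ℝ → ℝ) : Prop :=
  ContinuousOn u Ω ∧ ConcaveOn ℝ Ω u ∧ (∀ z ∈ frontier Ω, u z = 0) ∧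
    ∃ C : ℝ, ∀ z ∈ interior Ω, ∀ g : (ℝ × ℝ) →L[ℝ] ℝ, HasFDerivAt u g z → ‖g‖ ≤ C

/-- The `L¹` norm of `f` over `Ω`. -/
noncomputable def L1N (Ω : Set (ℝ × ℝ)) (f : ℝ × ℝ → ℝ) : ℝ := ∫ z in Ω, |f z|

/-- The `L^p` norm of `f` over `Ω`, `p ∈ [1, ∞)`. -/
noncomputable def LpN (Ω : Set (ℝ × ℝ)) (p : ℝ) (f : ℝ × ℝ → ℝ) : ℝ :=
  (∫ z in Ω, |f z| ^ p) ^ (1 / p)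

/-- The `L^∞` norm (essential supremum) of `f` over `Ω`. -/
noncomputable def LinfN (Ω : Set (ℝ × ℝ)) (f : ℝ × ℝ → ℝ) : ℝ≥0∞ :=
  essSup (fun z => ENNReal.ofReal |f z|) (volume.restrict Ω)

/-- The width of `Ω` parallel to the (Euclidean unit) vector `h`: the distance between the
two lines of support of `Ω` parallel to `h`, i.e. the oscillation over `Ω` of the linear
functional given by the unit normal `(-h.2, h.1)` to `h`. -/
noncomputable def widthPar (Ω : Set (ℝ × ℝ)) (h : ℝ × ℝ) : ℝ :=
  sSup ((fun z : ℝ × ℝ => -h.2 * z.1 + h.1 * z.2) '' Ω) -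
    sInf ((fun z : ℝ × ℝ => -h.2 * z.1 + h.1 * z.2) '' Ω)

/-- If `|g|` agrees almost everywhere with a nonnegative right derivative of a continuous `F`, then
`|g|` is integrable and its integral is the increment of `F`. -/
theorem integral_abs_of_ae_eq_deriv_right {F g r : ℝ → ℝ} {p q : ℝ} (hpq : p ≤ q)
    (hF : ContinuousOn F (Icc p q))
    (hderiv : ∀ x ∈ Ioo p q, HasDerivWithinAt F (r x) (Ioi x) x)
    (hr : ∀ x ∈ Ioo p q, 0 ≤ r x) (hg : ∀ᵐ x, x ∈ Ioo p q → |g x| = r x) :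
    IntervalIntegrable (fun x => |g x|) volume p q ∧ ∫ x in p..q, |g x| = F q - F p := by
  have hri : IntervalIntegrable r volume p q := by
    rw [intervalIntegrable_iff_integrableOn_Ioc_of_le hpq]
    exact intervalIntegral.integrableOn_deriv_right_of_nonneg hF hderiv hr
  have hae : ∀ᵐ x, x ∈ uIoc p q → r x = |g x| := by
    filter_upwards [hg, Measure.ae_ne volume q] with x hx hxq hmem
    rw [uIoc_of_le hpq] at hmem
    exact (hx ⟨hmem.1, lt_of_le_of_ne hmem.2 hxq⟩).symm
  refine ⟨hri.congr_ae ((ae_restrict_iff' measurableSet_uIoc).2 hae), ?_⟩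
  rw [← intervalIntegral.integral_congr_ae hae]
  exact intervalIntegral.integral_eq_sub_of_hasDeriv_right_of_le hpq hF hderiv hri

/-- The total variation of a concave function on `[a, b]` that vanishes at the endpoints is twice
its maximum. -/
theorem ConcaveOn.integral_abs_deriv_eq_two_mul {f g : ℝ → ℝ} {a b x₀ : ℝ}
    (hf : ConcaveOn ℝ (Icc a b) f) (hcont : ContinuousOn f (Icc a b)) (hx₀ : x₀ ∈ Icc a b)
    (hmax : ∀ x ∈ Icc a b, f x ≤ f x₀) (ha : f a = 0) (hb : f b = 0)
    (hg : ∀ᵐ x, x ∈ Icc a b → HasDerivAt f (g x) x) :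
    ∫ x in Icc a b, |g x| = 2 * f x₀ := by
  have hright : ∀ x ∈ Ioo a b, HasDerivWithinAt f (derivWithin f (Ioi x) x) (Ioi x) x := by
    intro x hx
    have h := hf.neg.differentiableWithinAt_Ioi_of_mem_interior (by rwa [interior_Icc])
    simpa using h.neg.hasDerivWithinAt
  have hgr : ∀ᵐ x, x ∈ Ioo a b → g x = derivWithin f (Ioi x) x := by
    filter_upwards [hg] with x hx hmem
    exact ((hx (Ioo_subset_Icc_self hmem)).hasDerivWithinAt.derivWithin
      (uniqueDiffWithinAt_Ioi x)).symm
  have hpos : ∀ x ∈ Ioo a x₀, 0 ≤ derivWithin f (Ioi x) x := by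
    intro x hx
    have hxab : x ∈ Ioo a b := ⟨hx.1, hx.2.trans_le hx₀.2⟩
    refine le_trans ?_ (hf.slope_le_of_hasDerivWithinAt_Ioi (Ioo_subset_Icc_self hxab) hx₀ hx.2
      (hright x hxab))
    rw [slope_def_field]
    exact div_nonneg (sub_nonneg.2 (hmax x (Ioo_subset_Icc_self hxab))) (sub_nonneg.2 hx.2.le)
  have hneg : ∀ x ∈ Ioo x₀ b, derivWithin f (Ioi x) x ≤ 0 := by
    intro x hx
    have hxab : x ∈ Ioo a b := ⟨hx₀.1.trans_lt hx.1, hx.2⟩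
    have hlr := hf.neg.leftDeriv_le_rightDeriv_of_mem_interior (x := x) (by rwa [interior_Icc])
    have hsl := hf.neg.slope_le_leftDeriv_of_mem_interior hx₀
      (by rwa [interior_Icc]) hx.1
    have hs : 0 ≤ slope (-f) x₀ x := by
      rw [slope_def_field]
      refine div_nonneg ?_ (sub_nonneg.2 hx.1.le)
      simpa using hmax x (Ioo_subset_Icc_self hxab)
    have h := hs.trans (hsl.trans hlr)
    rw [derivWithin.neg] at h
    linarith
  obtain ⟨hil, hl⟩ := integral_abs_of_ae_eq_deriv_right (F := f) (g := g)
    (r := fun x => derivWithin f (Ioi x) x) hx₀.1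
    (hcont.mono (Icc_subset_Icc_right hx₀.2))
    (fun x hx => hright x ⟨hx.1, hx.2.trans_le hx₀.2⟩) hpos (by
      filter_upwards [hgr] with x hx hmem
      rw [hx ⟨hmem.1, hmem.2.trans_le hx₀.2⟩, abs_of_nonneg (hpos x hmem)])
  obtain ⟨hir, hr⟩ := integral_abs_of_ae_eq_deriv_right (F := fun x => -f x) (g := g)
    (r := fun x => -derivWithin f (Ioi x) x) hx₀.2
    (hcont.mono (Icc_subset_Icc_left hx₀.1)).neg
    (fun x hx => (hright x ⟨hx₀.1.trans_lt hx.1, hx.2⟩).neg)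
    (fun x hx => neg_nonneg.2 (hneg x hx)) (by
      filter_upwards [hgr] with x hx hmem
      rw [hx ⟨hx₀.1.trans_lt hmem.1, hmem.2⟩, abs_of_nonpos (hneg x hmem)])
  rw [integral_Icc_eq_integral_Ioc, ← intervalIntegral.integral_of_le (hx₀.1.trans hx₀.2),
    ← intervalIntegral.integral_add_adjacent_intervals hil hir, hl, hr, ha, hb]
  ring

/-- A concave function on a convex set of a finite-dimensional space is differentiable at almost
every point of the set. -/
theorem ConcaveOn.ae_differentiableAt_of_mem {E : Type*} [NormedAddCommGroup E] [NormedSpace ℝ E]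
    [FiniteDimensional ℝ E] [MeasurableSpace E] [BorelSpace E] (μ : Measure E)
    [μ.IsAddHaarMeasure] {s : Set E} {f : E → ℝ} (hf : ConcaveOn ℝ s f) :
    ∀ᵐ z ∂μ, z ∈ s → DifferentiableAt ℝ f z := by
  have hint : ∀ᵐ z ∂μ, z ∈ interior s → DifferentiableAt ℝ f z := by
    rw [ae_iff]
    refine measure_null_of_locally_null _ fun z hz => ?_
    have hzi : z ∈ interior s := by
      by_contra h
      exact hz fun h' => absurd h' h
    obtain ⟨K, t, ht, hlip⟩ := hf.locallyLipschitzOn_interior hzi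
    have htz : t ∈ nhds z := by
      rwa [isOpen_interior.nhdsWithin_eq hzi] at ht
    refine ⟨interior t ∩ {w | ¬(w ∈ interior s → DifferentiableAt ℝ f w)},
      Filter.inter_mem (mem_nhdsWithin_of_mem_nhds (interior_mem_nhds.2 htz))
        self_mem_nhdsWithin, ?_⟩
    refine measure_mono_null ?_ (ae_iff.1 (hlip.ae_differentiableWithinAt_of_mem (μ := μ)))
    rintro w ⟨hwt, hw⟩ h
    exact hw fun _ => (h (interior_subset hwt)).differentiableAt (mem_interior_iff_mem_nhds.1 hwt)
  have hfr : ∀ᵐ z ∂μ, z ∉ frontier s := measure_eq_zero_iff_ae_notMem.1 (hf.1.addHaar_frontier μ)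
  filter_upwards [hint, hfr] with z hz hzf hzs
  refine hz ?_
  by_contra h
  exact hzf ⟨subset_closure hzs, h⟩

/-- A horizontal section of a compact convex planar set through one of its points is a segment whose
endpoints lie on the boundary. -/
theorem exists_section_eq_Icc {Ω : Set (ℝ × ℝ)} (hc : IsCompact Ω) (hconv : Convex ℝ Ω)
    {x₀ y : ℝ} (h₀ : (x₀, y) ∈ Ω) :
    ∃ a b : ℝ, (∀ x, (x, y) ∈ Ω ↔ x ∈ Icc a b) ∧ (a, y) ∈ frontier Ω ∧ (b, y) ∈ frontier Ω := by
  set S : Set ℝ := (fun x : ℝ => (x, y)) ⁻¹' Ω with hS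
  have hne : S.Nonempty := ⟨x₀, h₀⟩
  have hSc : IsCompact S := by
    refine (hc.image continuous_fst).of_isClosed_subset
      (hc.isClosed.preimage (by fun_prop)) fun x hx => ⟨(x, y), hx, rfl⟩
  have hSconv : Convex ℝ S := by
    intro x hx x' hx' s t hs ht hst
    have h := hconv hx hx' hs ht hst
    have hy : s * y + t * y = y := by rw [← add_mul, hst, one_mul]
    simpa [hS, hy] using h
  have hSI : S = Icc (sInf S) (sSup S) :=
    eq_Icc_of_connected_compact (hSconv.isConnected hne) hSc
  have hnhds : ∀ x, (x, y) ∈ interior Ω → S ∈ nhds x := fun x hx =>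
    (show Continuous fun x : ℝ => (x, y) by fun_prop).continuousAt.preimage_mem_nhds
      (mem_interior_iff_mem_nhds.1 hx)
  refine ⟨sInf S, sSup S, fun x => by rw [← hSI]; rfl, ⟨subset_closure (hSc.sInf_mem hne), ?_⟩,
    ⟨subset_closure (hSc.sSup_mem hne), ?_⟩⟩
  · intro h
    have h' := hnhds _ h
    rw [hSI, Icc_mem_nhds_iff] at h'
    exact absurd h'.1 (by rw [← hSI]; exact lt_irrefl _)
  · intro h
    have h' := hnhds _ h
    rw [hSI, Icc_mem_nhds_iff] at h'
    exact absurd h'.2 (by rw [← hSI]; exact lt_irrefl _)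

/-- A function with bounded gradient has integrable `x`-derivative over a compact convex set. -/
theorem MemU.integrableOn_abs_ux {Ω : Set (ℝ × ℝ)} {u : ℝ × ℝ → ℝ} (hu : MemU Ω u)
    (hc : IsCompact Ω) : IntegrableOn (fun z => |ux u z|) Ω := by
  obtain ⟨-, hconc, -, C, hC⟩ := hu
  have hmeas : Measurable (ux u) := measurable_fderiv_apply_const ℝ u (1, 0)
  have hfr : ∀ᵐ z : ℝ × ℝ, z ∉ frontier Ω :=
    measure_eq_zero_iff_ae_notMem.1 (hconc.1.addHaar_frontier volume)
  refine Measure.integrableOn_of_bounded (M := C * ‖((1, 0) : ℝ × ℝ)‖) hc.measure_lt_top.ne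
    hmeas.norm.aestronglyMeasurable ?_
  rw [ae_restrict_iff' hc.measurableSet]
  filter_upwards [hfr, hconc.ae_differentiableAt_of_mem volume] with z hzf hzd hz
  have hzi : z ∈ interior Ω := by
    by_contra h
    exact hzf ⟨subset_closure hz, h⟩
  rw [Real.norm_eq_abs, abs_abs, ← Real.norm_eq_abs]
  exact (fderiv ℝ u z).le_of_opNorm_le (hC z hzi _ (hzd hz).hasFDerivAt) _

/-- On almost every horizontal line meeting `Ω`, the integral of `|u_x|` is twice the maximum of `u`
on that line. -/
theorem MemU.ae_integral_section {Ω : Set (ℝ × ℝ)} {u : ℝ × ℝ → ℝ} (hu : MemU Ω u)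
    (hc : IsCompact Ω) :
    ∀ᵐ y : ℝ, ∀ M, IsGreatest (u '' {z ∈ Ω | z.2 = y}) M →
      ∫ x, Ω.indicator (fun z => |ux u z|) (x, y) = 2 * M := by
  obtain ⟨hcont, hconc, hzero, -⟩ := hu
  have hae : ∀ᵐ y : ℝ, ∀ᵐ x : ℝ, (x, y) ∈ Ω → DifferentiableAt ℝ u (x, y) := by
    have h := hconc.ae_differentiableAt_of_mem volume
    rw [Measure.volume_eq_prod] at h
    exact Measure.ae_ae_of_ae_prod
      ((Measure.measurePreserving_swap (μ := (volume : Measure ℝ))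
        (ν := (volume : Measure ℝ))).quasiMeasurePreserving.ae h)
  filter_upwards [hae] with y hy M hM
  obtain ⟨⟨⟨x₀, y'⟩, ⟨hx₀, rfl : y' = y⟩, hMx⟩, hub⟩ := hM
  obtain ⟨a, b, hsec, ha, hb⟩ := exists_section_eq_Icc hc hconc.1 hx₀
  have hind : (fun x => Ω.indicator (fun z => |ux u z|) (x, y')) =
      (Icc a b).indicator fun x => |ux u (x, y')| := by
    ext x
    by_cases hx : (x, y') ∈ Ω
    · rw [indicator_of_mem hx, indicator_of_mem ((hsec x).1 hx)]
    · rw [indicator_of_notMem hx, indicator_of_notMem (mt (hsec x).2 hx)]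
  have hslice : ConcaveOn ℝ (Icc a b) fun x => u (x, y') := by
    refine ⟨convex_Icc a b, fun x hx x' hx' s t hs ht hst => ?_⟩
    have h := hconc.2 ((hsec x).2 hx) ((hsec x').2 hx') hs ht hst
    have hyy : s * y' + t * y' = y' := by rw [← add_mul, hst, one_mul]
    simpa [hyy] using h
  rw [hind, integral_indicator measurableSet_Icc, ← hMx]
  refine hslice.integral_abs_deriv_eq_two_mul
    (hcont.comp (by fun_prop) fun x hx => (hsec x).2 hx) ((hsec x₀).1 hx₀)
    (fun x hx => hMx ▸ hub ⟨(x, y'), ⟨(hsec x).2 hx, rfl⟩, rfl⟩) (hzero _ ha) (hzero _ hb) ?_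
  filter_upwards [hy] with x hx hmem
  exact (hx ((hsec x).2 hmem)).hasFDerivAt.comp_hasDerivAt x
    ((hasDerivAt_id x).prodMk (hasDerivAt_const x y'))

/-- Proposition 1: `‖u_x‖₁ = ∫_c^d 2 m(y) dy`, where `[c,d]` is the
projection of `Ω` to the `y`-axis and `m(y)` is the maximum of `u` on the horizontal
section of `Ω` at height `y`. -/
theorem stmt_1 (Ω : Set (ℝ × ℝ)) (hΩc : IsCompact Ω) (hΩconv : Convex ℝ Ω)
    (hΩint : (interior Ω).Nonempty)
    (u : ℝ × ℝ → ℝ) (hu : MemU Ω u)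
    (c d : ℝ) (hproj : (fun z : ℝ × ℝ => z.2) '' Ω = Icc c d)
    (m : ℝ → ℝ) (hm : ∀ y ∈ Icc c d, IsGreatest (u '' {z ∈ Ω | z.2 = y}) (m y)) :
    L1N Ω (ux u) = ∫ y in c..d, 2 * m y := by
  rw [L1N, ← integral_indicator hΩc.measurableSet, Measure.volume_eq_prod, integral_prod_symm]
  · have hne : (Icc c d).Nonempty := hproj ▸ (hΩint.mono interior_subset).image _
    rw [intervalIntegral.integral_of_le (nonempty_Icc.1 hne), ← integral_Icc_eq_integral_Ioc,
      ← integral_indicator measurableSet_Icc]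
    refine integral_congr_ae ?_
    filter_upwards [hu.ae_integral_section hΩc] with y hy
    by_cases hyc : y ∈ Icc c d
    · rw [indicator_of_mem hyc, hy _ (hm y hyc)]
    · rw [indicator_of_notMem hyc]
      have hempty : ∀ x, (x, y) ∉ Ω := fun x hx => hyc (hproj ▸ ⟨(x, y), hx, rfl⟩)
      simp [hempty]
  · rw [← Measure.volume_eq_prod, integrable_indicator_iff hΩc.measurableSet]
    exact hu.integrableOn_abs_ux hΩc
end

section
/- Let u ∈ 𝒰_Ω with u not identically zero, let [c, d] be the orthogonal projection of Ω onto the y-axis, w = d − c, and M = max_{(x,y)∈Ω} u(x,y). Then ‖u_x‖₁ = w·M holds if and only if there exist a point of maximum z ∈ Ω of u, a lower point 𝐜 ∈ Ω (a point of Ω whose y-coordinate equals c) and an upper point 𝐝 ∈ Ω (a point of Ω whose y-coordinate equals d) such that u is affine on each of the two segments [z, 𝐜] and [z, 𝐝], and every point of these two segments is a point of maximum of the restriction of u to the horizontal line through that point intersected with Ω. -/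
open Set MeasureTheory
open scoped ENNReal

theorem integral_abs_deriv_of_monotoneOn {g h : ℝ → ℝ} {a b : ℝ} (hab : a ≤ b)
    (hg : ContinuousOn g (Icc a b)) (hmono : MonotoneOn g (Icc a b))
    (hright : ∀ x ∈ Ioo a b, DifferentiableWithinAt ℝ g (Ioi x) x)
    (hderiv : ∀ᵐ x, x ∈ Ioo a b → HasDerivAt g (h x) x) :
    IntervalIntegrable (fun x => |h x|) volume a b ∧ ∫ x in a..b, |h x| = g b - g a := by
  have hnonneg : ∀ x ∈ Ioo a b, 0 ≤ derivWithin g (Ioi x) x := by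
    intro x hx
    refine ge_of_tendsto ((hasDerivWithinAt_iff_tendsto_slope' self_notMem_Ioi).1
      (hright x hx).hasDerivWithinAt) ?_
    filter_upwards [Ioo_mem_nhdsGT hx.2] with t ht
    rw [slope_def_field]
    exact div_nonneg (sub_nonneg.2 (hmono ⟨hx.1.le, hx.2.le⟩ ⟨hx.1.le.trans ht.1.le, ht.2.le⟩
      ht.1.le)) (sub_nonneg.2 ht.1.le)
  have hint : IntervalIntegrable (fun x => derivWithin g (Ioi x) x) volume a b :=
    (intervalIntegrable_iff_integrableOn_Ioc_of_le hab).2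
      (intervalIntegral.integrableOn_deriv_right_of_nonneg hg
        (fun x hx => (hright x hx).hasDerivWithinAt) hnonneg)
  have hae : ∀ᵐ x, x ∈ uIoc a b → derivWithin g (Ioi x) x = |h x| := by
    filter_upwards [hderiv, Measure.ae_ne volume b] with x hx hxb hxab
    rw [uIoc_of_le hab] at hxab
    have hx' : x ∈ Ioo a b := ⟨hxab.1, lt_of_le_of_ne hxab.2 hxb⟩
    have heq := (hx hx').hasDerivWithinAt.derivWithin (uniqueDiffWithinAt_Ioi x)
    rw [← heq, abs_of_nonneg (hnonneg x hx')]
  refine ⟨hint.congr_ae ((ae_restrict_iff' measurableSet_uIoc).2 hae), ?_⟩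
  rw [← intervalIntegral.integral_congr_ae hae]
  exact intervalIntegral.integral_eq_sub_of_hasDeriv_right_of_le hab hg
    (fun x hx => (hright x hx).hasDerivWithinAt) hint

theorem ConcaveOn.integral_abs_deriv {g h : ℝ → ℝ} {a b x₀ : ℝ} (hx₀ : x₀ ∈ Icc a b)
    (hg : ContinuousOn g (Icc a b)) (hconc : ConcaveOn ℝ (Icc a b) g)
    (hmax : IsMaxOn g (Icc a b) x₀)
    (hderiv : ∀ᵐ x, x ∈ Ioo a b → HasDerivAt g (h x) x) :
    ∫ x in Ioo a b, |h x| = 2 * g x₀ - g a - g b := by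
  have hright : ∀ x ∈ Ioo a b, DifferentiableWithinAt ℝ g (Ioi x) x := by
    intro x hx
    simpa using (hconc.neg.differentiableWithinAt_Ioi_of_mem_interior
      (by rwa [interior_Icc])).neg
  have hl : Icc a x₀ ⊆ Icc a b := Icc_subset_Icc_right hx₀.2
  have hr : Icc x₀ b ⊆ Icc a b := Icc_subset_Icc_left hx₀.1
  have hmono : MonotoneOn g (Icc a x₀) := by
    intro x hx y hy hxy
    have := hconc.min_le_of_mem_Icc (hl hx) hx₀ ⟨hxy, hy.2⟩
    rwa [min_eq_left (hmax (hl hx))] at this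
  have hanti : AntitoneOn g (Icc x₀ b) := by
    intro x hx y hy hxy
    have := hconc.min_le_of_mem_Icc hx₀ (hr hy) ⟨hx.1, hxy⟩
    rwa [min_eq_right (hmax (hr hy))] at this
  obtain ⟨i₁, e₁⟩ := integral_abs_deriv_of_monotoneOn hx₀.1 (hg.mono hl) hmono
    (fun x hx => hright x ⟨hx.1, hx.2.trans_le hx₀.2⟩)
    (hderiv.mono fun x hx hx' => hx ⟨hx'.1, hx'.2.trans_le hx₀.2⟩)
  obtain ⟨i₂, e₂⟩ := integral_abs_deriv_of_monotoneOn (g := fun x => -g x) (h := fun x => -h x)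
    hx₀.2 (hg.mono hr).neg hanti.neg
    (fun x hx => (hright x ⟨hx₀.1.trans_lt hx.1, hx.2⟩).neg)
    (hderiv.mono fun x hx hx' => (hx ⟨hx₀.1.trans_lt hx'.1, hx'.2⟩).neg)
  simp only [abs_neg] at i₂ e₂
  rw [← integral_Ioc_eq_integral_Ioo, ← intervalIntegral.integral_of_le (hx₀.1.trans hx₀.2),
    ← intervalIntegral.integral_add_adjacent_intervals i₁ i₂, e₁, e₂]
  ring

theorem ConcaveOn.ae_differentiableAt {s : Set (ℝ × ℝ)} {u : ℝ × ℝ → ℝ} (hu : ConcaveOn ℝ s u) :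
    ∀ᵐ z, z ∈ interior s → DifferentiableAt ℝ u z := by
  rw [ae_iff]
  refine measure_null_of_locally_null _ fun z hz => ?_
  simp only [mem_ofPred_eq, Classical.not_imp] at hz
  obtain ⟨K, t, ht, hLip⟩ := hu.locallyLipschitzOn_interior hz.1
  rw [isOpen_interior.nhdsWithin_eq hz.1] at ht
  refine ⟨interior t ∩ {a | ¬(a ∈ interior s → DifferentiableAt ℝ u a)},
    Filter.inter_mem (mem_nhdsWithin_of_mem_nhds (interior_mem_nhds.2 ht)) self_mem_nhdsWithin, ?_⟩
  refine measure_mono_null ?_ (ae_iff.1 hLip.ae_differentiableWithinAt_of_mem)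
  rintro a ⟨ha, ha'⟩ h
  exact ha' fun _ => (h (interior_subset ha)).differentiableAt (mem_interior_iff_mem_nhds.1 ha)

/-- The tent function on `[c, d]` with peak `M` at `y₀`, vanishing at `c` and `d`. -/
noncomputable def tent (c d y₀ M y : ℝ) : ℝ := M * min ((y - c) / (y₀ - c)) ((d - y) / (d - y₀))

theorem continuous_tent (c d y₀ M : ℝ) : Continuous (tent c d y₀ M) := by
  unfold tent; fun_prop

theorem tent_of_le {c d y₀ M y : ℝ} (hc : c < y₀) (hd : y₀ < d) (hy : y ≤ y₀) :
    tent c d y₀ M y = M * ((y - c) / (y₀ - c)) := by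
  rw [tent, min_eq_left]
  calc _ ≤ (1 : ℝ) := (div_le_one (by linarith)).2 (by linarith)
    _ ≤ _ := (one_le_div (by linarith)).2 (by linarith)

theorem tent_of_ge {c d y₀ M y : ℝ} (hc : c < y₀) (hd : y₀ < d) (hy : y₀ ≤ y) :
    tent c d y₀ M y = M * ((d - y) / (d - y₀)) := by
  rw [tent, min_eq_right]
  calc _ ≤ (1 : ℝ) := (div_le_one (by linarith)).2 (by linarith)
    _ ≤ _ := (one_le_div (by linarith)).2 (by linarith)

theorem integral_tent {c d y₀ M : ℝ} (hc : c < y₀) (hd : y₀ < d) :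
    ∫ y in Ioo c d, tent c d y₀ M y = (d - c) * M / 2 := by
  have hi := fun a b => (continuous_tent c d y₀ M).intervalIntegrable (μ := volume) a b
  rw [← integral_Ioc_eq_integral_Ioo, ← intervalIntegral.integral_of_le (hc.trans hd).le,
    ← intervalIntegral.integral_add_adjacent_intervals (hi c y₀) (hi y₀ d),
    intervalIntegral.integral_congr (g := fun y => M * ((y - c) / (y₀ - c))),
    intervalIntegral.integral_congr (a := y₀) (g := fun y => M * ((d - y) / (d - y₀)))]
  · have h₁ : y₀ - c ≠ 0 := by linarith
    have h₂ : d - y₀ ≠ 0 := by linarith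
    simp only [intervalIntegral.integral_const_mul, intervalIntegral.integral_div]
    rw [intervalIntegral.integral_sub (by simp) (by simp),
      intervalIntegral.integral_sub (by simp) (by simp)]
    simp only [integral_id, intervalIntegral.integral_const, smul_eq_mul]
    field_simp
    ring
  · intro y hy
    rw [uIcc_of_le hd.le] at hy
    exact tent_of_ge hc hd hy.1
  · intro y hy
    rw [uIcc_of_le hc.le] at hy
    exact tent_of_le hc hd hy.2

theorem ConcaveOn.tent_le {c d y₀ : ℝ} {m : ℝ → ℝ} (hc : c < y₀) (hd : y₀ < d)
    (hm : ConcaveOn ℝ (Icc c d) m) (hmc : 0 ≤ m c) (hmd : 0 ≤ m d) {y : ℝ} (hy : y ∈ Icc c d) :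
    tent c d y₀ (m y₀) y ≤ m y := by
  have hcI : c ∈ Icc c d := ⟨le_rfl, (hc.trans hd).le⟩
  have hdI : d ∈ Icc c d := ⟨(hc.trans hd).le, le_rfl⟩
  have hyI : y₀ ∈ Icc c d := ⟨hc.le, hd.le⟩
  have h₁ : 0 < y₀ - c := by linarith
  have h₂ : 0 < d - y₀ := by linarith
  rcases le_total y y₀ with h | h
  · rw [tent_of_le hc hd h]
    have h0 : 0 ≤ (y₀ - y) / (y₀ - c) := div_nonneg (by linarith) h₁.le
    have := hm.2 hcI hyI h0 (div_nonneg (sub_nonneg.2 hy.1) h₁.le) (by field_simp; ring)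
    have e : ((y₀ - y) / (y₀ - c)) • c + ((y - c) / (y₀ - c)) • y₀ = y := by
      simp only [smul_eq_mul]; field_simp; ring
    rw [e] at this
    simp only [smul_eq_mul] at this
    linarith [mul_nonneg h0 hmc, mul_comm (m y₀) ((y - c) / (y₀ - c))]
  · rw [tent_of_ge hc hd h]
    have h0 : 0 ≤ (y - y₀) / (d - y₀) := div_nonneg (by linarith) h₂.le
    have := hm.2 hdI hyI h0 (div_nonneg (sub_nonneg.2 hy.2) h₂.le) (by field_simp; ring)
    have e : ((y - y₀) / (d - y₀)) • d + ((d - y) / (d - y₀)) • y₀ = y := by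
      simp only [smul_eq_mul]; field_simp; ring
    rw [e] at this
    simp only [smul_eq_mul] at this
    linarith [mul_nonneg h0 hmd, mul_comm (m y₀) ((d - y) / (d - y₀))]

theorem ConcaveOn.integral_eq_iff_eqOn_tent {c d y₀ : ℝ} {m : ℝ → ℝ} (hc : c < y₀) (hd : y₀ < d)
    (hm : ConcaveOn ℝ (Icc c d) m) (hmc : 0 ≤ m c) (hmd : 0 ≤ m d)
    (hint : IntegrableOn m (Ioo c d)) :
    ∫ y in Ioo c d, m y = (d - c) * m y₀ / 2 ↔ EqOn m (tent c d y₀ (m y₀)) (Ioo c d) := by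
  rw [← integral_tent hc hd]
  refine ⟨fun h => ?_, fun h => setIntegral_congr_fun measurableSet_Ioo h⟩
  have ht : IntegrableOn (tent c d y₀ (m y₀)) (Ioo c d) :=
    (continuous_tent c d y₀ (m y₀)).integrableOn_Icc.mono_set Ioo_subset_Icc_self
  have hle : tent c d y₀ (m y₀) ≤ᵐ[volume.restrict (Ioo c d)] m := by
    filter_upwards [ae_restrict_mem measurableSet_Ioo] with y hy
    exact hm.tent_le hc hd hmc hmd (Ioo_subset_Icc_self hy)
  refine Measure.eqOn_open_of_ae_eq (μ := volume) ?_ isOpen_Ioo ?_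
    (continuous_tent c d y₀ (m y₀)).continuousOn
  · exact ((integral_eq_iff_of_ae_le ht hint hle).1 h.symm).symm
  · simpa using hm.continuousOn_interior

theorem exists_horizontal_section {Ω : Set (ℝ × ℝ)} (hΩc : IsCompact Ω) (hΩ : Convex ℝ Ω)
    {x₁ y : ℝ} (hx₁ : (x₁, y) ∈ interior Ω) :
    ∃ a b, a < x₁ ∧ x₁ < b ∧ (∀ x, (x, y) ∈ Ω ↔ x ∈ Icc a b) ∧
      ∀ x, (x, y) ∈ interior Ω ↔ x ∈ Ioo a b := by
  have hcont : Continuous fun x : ℝ => (x, y) := by fun_prop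
  set S : Set ℝ := (fun x : ℝ => (x, y)) ⁻¹' Ω
  have hSc : IsCompact S := by
    refine Metric.isCompact_of_isClosed_isBounded (hΩc.isClosed.preimage hcont) ?_
    refine (hΩc.image continuous_fst).isBounded.subset fun x hx => ⟨(x, y), hx, rfl⟩
  have hx₁S : (x₁, y) ∈ Ω := interior_subset hx₁
  have hcombo : ∀ {p q x : ℝ}, (p, y) ∈ interior Ω → (q, y) ∈ Ω → x ∈ openSegment ℝ p q →
      (x, y) ∈ interior Ω := by
    rintro p q x hp hq ⟨s, t, hs, ht, hst, rfl⟩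
    refine hΩ.openSegment_interior_self_subset_interior hp hq ⟨s, t, hs, ht, hst, ?_⟩
    ext
    · simp
    · simp [← add_mul, hst]
  have hSconn : S.OrdConnected := by
    refine Convex.ordConnected ?_
    rintro p hp q hq s t hs ht hst
    have := hΩ hp hq hs ht hst
    have e : s • (p, y) + t • (q, y) = (s • p + t • q, y) := by
      ext
      · simp
      · simp [← add_mul, hst]
    rwa [e] at this
  obtain ⟨a, ha⟩ := hSc.exists_isLeast ⟨x₁, hx₁S⟩
  obtain ⟨b, hb⟩ := hSc.exists_isGreatest ⟨x₁, hx₁S⟩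
  have hmem : ∀ x, (x, y) ∈ Ω ↔ x ∈ Icc a b := fun x =>
    ⟨fun hx => ⟨ha.2 hx, hb.2 hx⟩, fun hx => hSconn.out ha.1 hb.1 hx⟩
  have hopen : IsOpen ((fun x : ℝ => (x, y)) ⁻¹' interior Ω) := isOpen_interior.preimage hcont
  have hint : ∀ x, (x, y) ∈ interior Ω → x ∈ Ioo a b := by
    intro x hx
    have hsub : (fun x : ℝ => (x, y)) ⁻¹' interior Ω ⊆ Icc a b := fun x hx =>
      (hmem x).1 (interior_subset hx)
    simpa using interior_maximal hsub hopen hx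
  refine ⟨a, b, (hint x₁ hx₁).1, (hint x₁ hx₁).2, hmem, fun x => ⟨hint x, fun hx => ?_⟩⟩
  rcases lt_trichotomy x x₁ with h | rfl | h
  · refine hcombo hx₁ ha.1 ?_
    rw [openSegment_symm, openSegment_eq_Ioo (hx.1.trans h)]
    exact ⟨hx.1, h⟩
  · exact hx₁
  · refine hcombo hx₁ hb.1 ?_
    rw [openSegment_eq_Ioo (h.trans hx.2)]
    exact ⟨h, hx.2⟩

theorem snd_mem_Ioo_of_mem_interior {Ω : Set (ℝ × ℝ)} {c d : ℝ}
    (hproj : (fun z : ℝ × ℝ => z.2) '' Ω = Icc c d) {z : ℝ × ℝ} (hz : z ∈ interior Ω) :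
    z.2 ∈ Ioo c d := by
  have hsub : Prod.snd '' interior Ω ⊆ Icc c d := by
    rw [← hproj]
    exact image_mono interior_subset
  have := interior_maximal hsub (isOpenMap_snd _ isOpen_interior) (mem_image_of_mem _ hz)
  rwa [interior_Icc] at this

theorem exists_mem_interior_of_mem_Ioo {Ω : Set (ℝ × ℝ)} (hΩ : Convex ℝ Ω)
    (hΩint : (interior Ω).Nonempty) {c d : ℝ}
    (hproj : (fun z : ℝ × ℝ => z.2) '' Ω = Icc c d) {y : ℝ} (hy : y ∈ Ioo c d) :
    ∃ x, (x, y) ∈ interior Ω := by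
  obtain ⟨q, hq⟩ := hΩint
  have hmem : ∀ e ∈ Icc c d, ∃ p ∈ Ω, p.2 = e := fun e he => by
    rw [← hproj] at he
    exact he
  have hcd := (hy.1.trans hy.2).le
  have key : ∀ p ∈ Ω, y ∈ openSegment ℝ q.2 p.2 → ∃ x, (x, y) ∈ interior Ω := by
    rintro p hp ⟨s, t, hs, ht, hst, rfl⟩
    exact ⟨s * q.1 + t * p.1, hΩ.openSegment_interior_self_subset_interior hq hp
      ⟨s, t, hs, ht, hst, rfl⟩⟩
  rcases lt_trichotomy y q.2 with h | h | h
  · obtain ⟨p, hp, hpc⟩ := hmem c ⟨le_rfl, hcd⟩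
    refine key p hp ?_
    rw [hpc, openSegment_symm, openSegment_eq_Ioo (hy.1.trans h)]
    exact ⟨hy.1, h⟩
  · exact ⟨q.1, by rwa [h]⟩
  · obtain ⟨p, hp, hpd⟩ := hmem d ⟨hcd, le_rfl⟩
    refine key p hp ?_
    rw [hpd, openSegment_eq_Ioo (h.trans hy.2)]
    exact ⟨h, hy.2⟩

theorem MemU.eq_zero {Ω : Set (ℝ × ℝ)} {u : ℝ × ℝ → ℝ} (hu : MemU Ω u) {z : ℝ × ℝ} (hz : z ∈ Ω)
    (hz' : z ∉ interior Ω) : u z = 0 :=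
  hu.2.2.1 z ⟨subset_closure hz, hz'⟩

theorem MemU.integral_section {Ω : Set (ℝ × ℝ)} (hΩc : IsCompact Ω) (hΩ : Convex ℝ Ω)
    {u : ℝ × ℝ → ℝ} (hu : MemU Ω u) {x₁ y m : ℝ} (hx₁ : (x₁, y) ∈ interior Ω)
    (hm : IsGreatest (u '' {q ∈ Ω | q.2 = y}) m)
    (hdiff : ∀ᵐ x, (x, y) ∈ interior Ω → DifferentiableAt ℝ u (x, y)) :
    ∫ x, (interior Ω).indicator (fun z => |ux u z|) (x, y) = 2 * m := by
  obtain ⟨a, b, -, -, hmem, hint⟩ := exists_horizontal_section hΩc hΩ hx₁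
  obtain ⟨⟨⟨x₀, y'⟩, ⟨hx₀, rfl⟩, rfl⟩, hmax⟩ := hm
  dsimp only at *
  have hx₀' := (hmem x₀).1 hx₀
  have hab := hx₀'.1.trans hx₀'.2
  have ha : u (a, y') = 0 := hu.eq_zero ((hmem a).2 ⟨le_rfl, hab⟩) (by simp [hint])
  have hb : u (b, y') = 0 := hu.eq_zero ((hmem b).2 ⟨hab, le_rfl⟩) (by simp [hint])
  have hconc : ConcaveOn ℝ (Icc a b) fun x => u (x, y') := by
    refine ⟨convex_Icc a b, fun p hp q hq s t hs ht hst => ?_⟩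
    have := hu.2.1.2 ((hmem p).2 hp) ((hmem q).2 hq) hs ht hst
    have e : s • (p, y') + t • (q, y') = (s • p + t • q, y') := by
      ext
      · simp
      · simp [← add_mul, hst]
    rwa [e] at this
  have hcont : ContinuousOn (fun x => u (x, y')) (Icc a b) :=
    hu.1.comp (by fun_prop) fun x hx => (hmem x).2 hx
  have key := hconc.integral_abs_deriv (h := fun x => ux u (x, y')) hx₀' hcont
    (fun x hx => hmax ⟨(x, y'), ⟨(hmem x).2 hx, rfl⟩, rfl⟩)
    (hdiff.mono fun x hx hxI =>
      (hx ((hint x).2 hxI)).hasFDerivAt.comp_hasDerivAt x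
        ((hasDerivAt_id x).prodMk (hasDerivAt_const x y')))
  simp only [ha, hb, sub_zero] at key
  rw [← key, ← integral_indicator measurableSet_Ioo]
  congr 1 with x
  by_cases hx : x ∈ Ioo a b
  · rw [indicator_of_mem hx, indicator_of_mem ((hint x).2 hx)]
  · rw [indicator_of_notMem hx, indicator_of_notMem (mt (hint x).1 hx)]

theorem MemU.integrable_indicator_abs_ux {Ω : Set (ℝ × ℝ)} (hΩc : IsCompact Ω)
    {u : ℝ × ℝ → ℝ} (hu : MemU Ω u) :
    Integrable ((interior Ω).indicator fun z => |ux u z|) := by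
  obtain ⟨C, hC⟩ := hu.2.2.2
  rw [integrable_indicator_iff isOpen_interior.measurableSet]
  have hfin : volume (interior Ω) < ∞ :=
    (measure_mono interior_subset).trans_lt hΩc.measure_lt_top
  refine Measure.integrableOn_of_bounded (M := max C 0 * ‖((1, 0) : ℝ × ℝ)‖) hfin.ne
    (measurable_fderiv_apply_const ℝ u (1, 0)).abs.aestronglyMeasurable ?_
  filter_upwards [ae_restrict_mem isOpen_interior.measurableSet] with z hz
  rw [Real.norm_eq_abs, abs_abs]
  refine ((fderiv ℝ u z).le_opNorm (1, 0)).trans ?_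
  gcongr
  by_cases h : DifferentiableAt ℝ u z
  · exact (hC z hz _ h.hasFDerivAt).trans (le_max_left _ _)
  · simp [fderiv_zero_of_not_differentiableAt h]

theorem MemU.L1N_ux_eq {Ω : Set (ℝ × ℝ)} (hΩc : IsCompact Ω) (hΩ : Convex ℝ Ω)
    (hΩint : (interior Ω).Nonempty) {u : ℝ × ℝ → ℝ} (hu : MemU Ω u) {c d : ℝ}
    (hproj : (fun z : ℝ × ℝ => z.2) '' Ω = Icc c d) {m : ℝ → ℝ}
    (hm : ∀ y ∈ Icc c d, IsGreatest (u '' {q ∈ Ω | q.2 = y}) (m y)) :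
    IntegrableOn m (Ioo c d) ∧ L1N Ω (ux u) = 2 * ∫ y in Ioo c d, m y := by
  have hF := hu.integrable_indicator_abs_ux hΩc
  have hdiff : ∀ᵐ y : ℝ, ∀ᵐ x : ℝ, (x, y) ∈ interior Ω → DifferentiableAt ℝ u (x, y) :=
    Measure.ae_ae_of_ae_prod
      ((Measure.measurePreserving_swap (μ := (volume : Measure ℝ))
        (ν := (volume : Measure ℝ))).quasiMeasurePreserving.ae hu.2.1.ae_differentiableAt)
  have hae : (fun y => ∫ x, (interior Ω).indicator (fun z => |ux u z|) (x, y)) =ᵐ[volume]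
      (Ioo c d).indicator fun y => 2 * m y := by
    filter_upwards [hdiff] with y hy
    by_cases hyI : y ∈ Ioo c d
    · obtain ⟨x₁, hx₁⟩ := exists_mem_interior_of_mem_Ioo hΩ hΩint hproj hyI
      rw [indicator_of_mem hyI]
      exact hu.integral_section hΩc hΩ hx₁ (hm y (Ioo_subset_Icc_self hyI)) hy
    · rw [indicator_of_notMem hyI]
      refine integral_eq_zero_of_ae (Filter.Eventually.of_forall fun x => ?_)
      exact indicator_of_notMem (fun h => hyI (snd_mem_Ioo_of_mem_interior hproj h)) _
  constructor
  · have h : IntegrableOn (fun y => 2 * m y) (Ioo c d) :=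
      (integrable_indicator_iff measurableSet_Ioo).1
        ((Integrable.integral_prod_right hF).congr hae)
    simpa [IntegrableOn] using h.const_mul 2⁻¹
  · have hset : (Ω : Set (ℝ × ℝ)) =ᵐ[volume] interior Ω :=
      (interior_ae_eq_of_null_frontier (hΩ.addHaar_frontier volume)).symm
    rw [L1N, setIntegral_congr_set hset, ← integral_indicator isOpen_interior.measurableSet,
      Measure.volume_eq_prod, integral_prod_symm _ hF, integral_congr_ae hae,
      integral_indicator measurableSet_Ioo, integral_const_mul]

theorem concaveOn_of_isGreatest_section {Ω : Set (ℝ × ℝ)} {u : ℝ × ℝ → ℝ}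
    (hu : ConcaveOn ℝ Ω u) {c d : ℝ} {m : ℝ → ℝ}
    (hm : ∀ y ∈ Icc c d, IsGreatest (u '' {q ∈ Ω | q.2 = y}) (m y)) :
    ConcaveOn ℝ (Icc c d) m := by
  refine ⟨convex_Icc c d, fun y₁ h₁ y₂ h₂ s t hs ht hst => ?_⟩
  obtain ⟨p, ⟨hp, rfl⟩, hpm⟩ := (hm y₁ h₁).1
  obtain ⟨q, ⟨hq, rfl⟩, hqm⟩ := (hm y₂ h₂).1
  rw [← hpm, ← hqm]
  exact (hu.2 hp hq hs ht hst).trans ((hm _ (convex_Icc c d h₁ h₂ hs ht hst)).2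
    ⟨s • p + t • q, ⟨hu.1 hp hq hs ht hst, rfl⟩, rfl⟩)

theorem MemU.pos_of_isGreatest {Ω : Set (ℝ × ℝ)} (hΩc : IsCompact Ω) (hΩ : Convex ℝ Ω)
    {u : ℝ × ℝ → ℝ} (hu : MemU Ω u) (hne : ∃ z ∈ Ω, u z ≠ 0) {M : ℝ}
    (hM : IsGreatest (u '' Ω) M) : 0 < M := by
  obtain ⟨⟨x, y⟩, hz, hz0⟩ := hne
  have hzint : (x, y) ∈ interior Ω := by
    by_contra h
    exact hz0 (hu.eq_zero hz h)
  obtain ⟨a, b, hax, hxb, hmem, hint⟩ := exists_horizontal_section hΩc hΩ hzint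
  have haΩ := (hmem a).2 ⟨le_rfl, (hax.trans hxb).le⟩
  have hbΩ := (hmem b).2 ⟨(hax.trans hxb).le, le_rfl⟩
  have hseg : (x, y) ∈ segment ℝ (a, y) (b, y) := by
    rw [← Prod.image_mk_segment_left, segment_eq_Icc (hax.trans hxb).le]
    exact ⟨x, ⟨hax.le, hxb.le⟩, rfl⟩
  have hmin := hu.2.1.ge_on_segment haΩ hbΩ hseg
  rw [hu.eq_zero haΩ (by simp [hint]), hu.eq_zero hbΩ (by simp [hint]), min_self] at hmin
  exact (lt_of_le_of_ne hmin hz0.symm).trans_le (hM.2 ⟨_, hz, rfl⟩)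

theorem ConcaveOn.affine_and_max_of_section_max_eq {Ω : Set (ℝ × ℝ)} {u : ℝ × ℝ → ℝ}
    (hu : ConcaveOn ℝ Ω u) {c d : ℝ} {m : ℝ → ℝ}
    (hm : ∀ y ∈ Icc c d, IsGreatest (u '' {q ∈ Ω | q.2 = y}) (m y)) {z p : ℝ × ℝ}
    (hz : z ∈ Ω) (hp : p ∈ Ω) (hzI : z.2 ∈ Icc c d) (hpI : p.2 ∈ Icc c d) (hp0 : u p = 0)
    {t : ℝ} (ht : t ∈ Icc (0 : ℝ) 1)
    (hmt : m ((1 - t) * z.2 + t * p.2) = (1 - t) * u z) :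
    u ((1 - t) • z + t • p) = (1 - t) * u z + t * u p ∧
      ∀ q ∈ Ω, q.2 = ((1 - t) • z + t • p).2 → u q ≤ u ((1 - t) • z + t • p) := by
  have h0 : 0 ≤ 1 - t := sub_nonneg.2 ht.2
  have hst : 1 - t + t = 1 := by ring
  have hle := hu.2 hz hp h0 ht.1 hst
  have hg := (hm _ (convex_Icc c d hzI hpI h0 ht.1 hst)).2
  simp only [smul_eq_mul] at hle hg
  rw [hmt] at hg
  have hub : u ((1 - t) • z + t • p) ≤ (1 - t) * u z :=
    hg ⟨_, ⟨hu.1 hz hp h0 ht.1 hst, rfl⟩, rfl⟩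
  rw [hp0, mul_zero, add_zero] at hle ⊢
  exact ⟨le_antisymm hub hle, fun q hq hq2 => (hg ⟨q, ⟨hq, hq2⟩, rfl⟩).trans hle⟩

/-- Theorem 3, lower bound case: `‖u_x‖₁ = w·M` holds iff there are a point
of maximum `z` of `u`, a lower point `cp` and an upper point `dp` of `Ω` such that `u` is
affine on the segments `[z, cp]`, `[z, dp]` and every point of these segments maximizes
`u` on the horizontal section of `Ω` through it. -/
theorem stmt_3 (Ω : Set (ℝ × ℝ)) (hΩc : IsCompact Ω) (hΩconv : Convex ℝ Ω)
    (hΩint : (interior Ω).Nonempty)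
    (u : ℝ × ℝ → ℝ) (hu : MemU Ω u) (hne : ∃ z ∈ Ω, u z ≠ 0)
    (c d : ℝ) (hproj : (fun z : ℝ × ℝ => z.2) '' Ω = Icc c d)
    (M : ℝ) (hM : IsGreatest (u '' Ω) M) :
    L1N Ω (ux u) = (d - c) * M ↔
      ∃ z ∈ Ω, ∃ cp ∈ Ω, ∃ dp ∈ Ω,
        u z = M ∧ cp.2 = c ∧ dp.2 = d ∧
        (∀ t ∈ Icc (0:ℝ) 1, u ((1 - t) • z + t • cp) = (1 - t) * u z + t * u cp) ∧
        (∀ t ∈ Icc (0:ℝ) 1, u ((1 - t) • z + t • dp) = (1 - t) * u z + t * u dp) ∧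
        (∀ t ∈ Icc (0:ℝ) 1, ∀ q ∈ Ω, q.2 = ((1 - t) • z + t • cp).2 →
          u q ≤ u ((1 - t) • z + t • cp)) ∧
        (∀ t ∈ Icc (0:ℝ) 1, ∀ q ∈ Ω, q.2 = ((1 - t) • z + t • dp).2 →
          u q ≤ u ((1 - t) • z + t • dp)) := by
  have hpre : ∀ y ∈ Icc c d, ∃ q ∈ Ω, q.2 = y := fun y hy => by
    rw [← hproj] at hy
    exact hy
  have hsnd : ∀ q ∈ Ω, q.2 ∈ Icc c d := fun q hq => hproj ▸ mem_image_of_mem _ hq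
  have hex : ∀ y ∈ Icc c d, ∃ v, IsGreatest (u '' {q ∈ Ω | q.2 = y}) v := by
    intro y hy
    obtain ⟨q, hq, hqy⟩ := hpre y hy
    have hcomp : IsCompact {q ∈ Ω | q.2 = y} :=
      hΩc.inter_right (isClosed_eq continuous_snd continuous_const)
    exact (hcomp.image_of_continuousOn (hu.1.mono (sep_subset _ _))).exists_isGreatest
      ⟨u q, q, ⟨hq, hqy⟩, rfl⟩
  choose! m hm using hex
  have hMpos := hu.pos_of_isGreatest hΩc hΩconv hne hM
  have hzmax : ∀ z ∈ Ω, u z = M → z.2 ∈ Ioo c d ∧ m z.2 = M := by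
    intro z hz hzM
    refine ⟨snd_mem_Ioo_of_mem_interior hproj ?_, le_antisymm ?_ ?_⟩
    · by_contra h
      exact hMpos.ne' (hzM ▸ hu.eq_zero hz h)
    · obtain ⟨q, ⟨hq, -⟩, hqm⟩ := (hm _ (hsnd z hz)).1
      exact hqm ▸ hM.2 ⟨q, hq, rfl⟩
    · exact hzM ▸ (hm _ (hsnd z hz)).2 ⟨z, ⟨hz, rfl⟩, rfl⟩
  have hlow : ∀ q ∈ Ω, q.2 = c → u q = 0 := fun q hq h => hu.eq_zero hq fun hq' =>
    (snd_mem_Ioo_of_mem_interior hproj hq').1.ne' h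
  have hupp : ∀ q ∈ Ω, q.2 = d → u q = 0 := fun q hq h => hu.eq_zero hq fun hq' =>
    (snd_mem_Ioo_of_mem_interior hproj hq').2.ne h
  have hcd : c ≤ d := by
    obtain ⟨q, hq⟩ := hΩint
    have h := snd_mem_Ioo_of_mem_interior hproj hq
    exact (h.1.trans h.2).le
  have hcI : c ∈ Icc c d := ⟨le_rfl, hcd⟩
  have hdI : d ∈ Icc c d := ⟨hcd, le_rfl⟩
  have hmc : m c = 0 := by
    obtain ⟨q, ⟨hq, hqc⟩, hqm⟩ := (hm c hcI).1
    rw [← hqm, hlow q hq hqc]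
  have hmd : m d = 0 := by
    obtain ⟨q, ⟨hq, hqd⟩, hqm⟩ := (hm d hdI).1
    rw [← hqm, hupp q hq hqd]
  obtain ⟨hint, hL⟩ := hu.L1N_ux_eq hΩc hΩconv hΩint hproj hm
  have hiff : ∀ z ∈ Ω, u z = M →
      (L1N Ω (ux u) = (d - c) * M ↔ EqOn m (tent c d z.2 M) (Ioo c d)) := by
    intro z hz hzM
    obtain ⟨hzI, hmz⟩ := hzmax z hz hzM
    have h := (concaveOn_of_isGreatest_section hu.2.1 hm).integral_eq_iff_eqOn_tent hzI.1 hzI.2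
      hmc.ge hmd.ge hint
    rw [hmz] at h
    rw [← h, hL]
    constructor <;> intro h' <;> linarith
  constructor
  · intro h
    obtain ⟨z, hz, hzM⟩ := hM.1
    obtain ⟨cp, hcp, hcpc⟩ := hpre c hcI
    obtain ⟨dp, hdp, hdpd⟩ := hpre d hdI
    obtain ⟨hzI, -⟩ := hzmax z hz hzM
    have htent : ∀ y ∈ Icc c d, m y = tent c d z.2 M y := by
      intro y hy
      rcases eq_or_lt_of_le hy.1 with rfl | h₁
      · rw [hmc, tent_of_le hzI.1 hzI.2 hzI.1.le]
        simp
      rcases eq_or_lt_of_le hy.2 with rfl | h₂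
      · rw [hmd, tent_of_ge hzI.1 hzI.2 hzI.2.le]
        simp
      exact (hiff z hz hzM).1 h ⟨h₁, h₂⟩
    have hc : ∀ t ∈ Icc (0 : ℝ) 1, m ((1 - t) * z.2 + t * cp.2) = (1 - t) * u z := by
      intro t ht
      have h₁ : z.2 - c ≠ 0 := (sub_pos.2 hzI.1).ne'
      rw [htent ((1 - t) * z.2 + t * cp.2)
          (convex_Icc c d (hsnd z hz) (hsnd cp hcp) (sub_nonneg.2 ht.2) ht.1 (by ring)),
        tent_of_le hzI.1 hzI.2 (by nlinarith [ht.1, hzI.1]), hzM, hcpc]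
      field_simp
      ring
    have hd : ∀ t ∈ Icc (0 : ℝ) 1, m ((1 - t) * z.2 + t * dp.2) = (1 - t) * u z := by
      intro t ht
      have h₁ : d - z.2 ≠ 0 := (sub_pos.2 hzI.2).ne'
      rw [htent ((1 - t) * z.2 + t * dp.2)
          (convex_Icc c d (hsnd z hz) (hsnd dp hdp) (sub_nonneg.2 ht.2) ht.1 (by ring)),
        tent_of_ge hzI.1 hzI.2 (by nlinarith [ht.1, hzI.2]), hzM, hdpd]
      field_simp
      ring
    have kc := fun t ht => hu.2.1.affine_and_max_of_section_max_eq hm hz hcp (hsnd z hz)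
      (hsnd cp hcp) (hlow cp hcp hcpc) ht (hc t ht)
    have kd := fun t ht => hu.2.1.affine_and_max_of_section_max_eq hm hz hdp (hsnd z hz)
      (hsnd dp hdp) (hupp dp hdp hdpd) ht (hd t ht)
    exact ⟨z, hz, cp, hcp, dp, hdp, hzM, hcpc, hdpd, fun t ht => (kc t ht).1,
      fun t ht => (kd t ht).1, fun t ht => (kc t ht).2, fun t ht => (kd t ht).2⟩
  · rintro ⟨z, hz, cp, hcp, dp, hdp, hzM, hcpc, hdpd, ac, ad, gc, gd⟩
    obtain ⟨hzI, -⟩ := hzmax z hz hzM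
    refine (hiff z hz hzM).2 fun y hy => ?_
    have key : ∀ p ∈ Ω, u p = 0 → ∀ t ∈ Icc (0 : ℝ) 1,
        u ((1 - t) • z + t • p) = (1 - t) * u z + t * u p →
        (∀ q ∈ Ω, q.2 = ((1 - t) • z + t • p).2 → u q ≤ u ((1 - t) • z + t • p)) →
        ((1 - t) • z + t • p).2 = y → m y = M * (1 - t) := by
      intro p hp hp0 t ht ha hg hy'
      have hg' : IsGreatest (u '' {q ∈ Ω | q.2 = y}) (u ((1 - t) • z + t • p)) := by
        refine ⟨⟨_, ⟨hΩconv hz hp (sub_nonneg.2 ht.2) ht.1 (by ring), hy'⟩, rfl⟩, ?_⟩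
        rintro _ ⟨q, ⟨hq, hqy⟩, rfl⟩
        exact hg q hq (hqy.trans hy'.symm)
      rw [(hm y (Ioo_subset_Icc_self hy)).unique hg', ha, hp0, hzM]
      ring
    rcases le_total y z.2 with h | h
    · have h₁ : 0 < z.2 - c := sub_pos.2 hzI.1
      have ht : (z.2 - y) / (z.2 - c) ∈ Icc (0 : ℝ) 1 :=
        ⟨div_nonneg (sub_nonneg.2 h) h₁.le, (div_le_one h₁).2 (by linarith [hy.1])⟩
      rw [tent_of_le hzI.1 hzI.2 h, key cp hcp (hlow cp hcp hcpc) _ ht (ac _ ht) (gc _ ht)]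
      · field_simp
        ring
      · simp only [Prod.snd_add, Prod.smul_snd, smul_eq_mul, hcpc]
        field_simp
        ring
    · have h₁ : 0 < d - z.2 := sub_pos.2 hzI.2
      have ht : (y - z.2) / (d - z.2) ∈ Icc (0 : ℝ) 1 :=
        ⟨div_nonneg (sub_nonneg.2 h) h₁.le, (div_le_one h₁).2 (by linarith [hy.2])⟩
      rw [tent_of_ge hzI.1 hzI.2 h, key dp hdp (hupp dp hdp hdpd) _ ht (ad _ ht) (gd _ ht)]
      · field_simp
        ring
      · simp only [Prod.snd_add, Prod.smul_snd, smul_eq_mul, hdpd]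
        field_simp
        ring
end

section
/- Let w_x and w_y denote the lengths of the orthogonal projections of Ω onto the x-axis and onto the y-axis, respectively (the sidelengths of the rectangle circumscribed around Ω with sides parallel to the coordinate axes). Then for every u ∈ 𝒰_Ω one has ‖u_x‖₁ ≤ 2 (w_y / w_x) ‖u_y‖₁. -/
open Set MeasureTheory
open scoped ENNReal

theorem lintegral_enorm_deriv_le_of_monotoneOn {f : ℝ → ℝ} {p q : ℝ} (hpq : p ≤ q)
    (hf : MonotoneOn f (Icc p q)) :
    ∫⁻ t in Icc p q, ‖deriv f t‖ₑ ≤ ENNReal.ofReal (f q - f p) := by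
  have hf' : MonotoneOn f (uIcc p q) := by rwa [uIcc_of_le hpq]
  have hint := (intervalIntegrable_iff_integrableOn_Ioo_of_le hpq).1 hf'.intervalIntegrable_deriv
  have hle : ∫ t in p..q, deriv f t ≤ f q - f p := by
    have h := hf'.intervalIntegral_deriv_mem_uIcc
    rw [uIcc_of_le (sub_nonneg.2 (hf (left_mem_Icc.2 hpq) (right_mem_Icc.2 hpq) hpq))] at h
    exact h.2
  rw [← restrict_Ioo_eq_restrict_Icc, ← ofReal_integral_norm_eq_lintegral_enorm hint]
  apply ENNReal.ofReal_le_ofReal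
  rw [intervalIntegral.integral_of_le hpq, integral_Ioc_eq_integral_Ioo] at hle
  refine le_of_eq_of_le (setIntegral_congr_fun measurableSet_Ioo fun t ht => ?_) hle
  have hnonneg : 0 ≤ deriv f t := by
    rw [← derivWithin_of_mem_nhds (Icc_mem_nhds ht.1 ht.2)]
    exact hf.derivWithin_nonneg
  exact Real.norm_of_nonneg hnonneg

theorem lintegral_enorm_deriv_le_of_antitoneOn {f : ℝ → ℝ} {p q : ℝ} (hpq : p ≤ q)
    (hf : AntitoneOn f (Icc p q)) :
    ∫⁻ t in Icc p q, ‖deriv f t‖ₑ ≤ ENNReal.ofReal (f p - f q) := by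
  have h := lintegral_enorm_deriv_le_of_monotoneOn hpq hf.neg
  simpa [deriv.fun_neg', neg_add_eq_sub] using h

/-- A concave function with values in `[0, M]` has total variation at most `2 * M`. -/
theorem ConcaveOn.lintegral_enorm_deriv_le {f : ℝ → ℝ} {p q M : ℝ}
    (hconc : ConcaveOn ℝ (Icc p q) f) (hcont : ContinuousOn f (Icc p q))
    (hnonneg : ∀ t ∈ Icc p q, 0 ≤ f t) (hle : ∀ t ∈ Icc p q, f t ≤ M) :
    ∫⁻ t in Icc p q, ‖deriv f t‖ₑ ≤ ENNReal.ofReal (2 * M) := by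
  rcases lt_or_ge q p with hqp | hpq
  · simp [Icc_eq_empty_of_lt hqp]
  obtain ⟨m, hm, hmax⟩ := isCompact_Icc.exists_isMaxOn (nonempty_Icc.2 hpq) hcont
  have hmono : MonotoneOn f (Icc p m) := by
    intro s hs t ht hst
    have hs' : s ∈ Icc p q := ⟨hs.1, hs.2.trans hm.2⟩
    have h := hconc.min_le_of_mem_Icc hs' hm ⟨hst, ht.2⟩
    rwa [min_eq_left (hmax hs')] at h
  have hanti : AntitoneOn f (Icc m q) := by
    intro s hs t ht hst
    have ht' : t ∈ Icc p q := ⟨hm.1.trans ht.1, ht.2⟩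
    have h := hconc.min_le_of_mem_Icc hm ht' ⟨hs.1, hst⟩
    rwa [min_eq_right (hmax ht')] at h
  have hp := hnonneg p (left_mem_Icc.2 hpq)
  have hq := hnonneg q (right_mem_Icc.2 hpq)
  have hmM := hle m hm
  calc ∫⁻ t in Icc p q, ‖deriv f t‖ₑ
      ≤ (∫⁻ t in Icc p m, ‖deriv f t‖ₑ) + ∫⁻ t in Icc m q, ‖deriv f t‖ₑ := by
        rw [← Icc_union_Icc_eq_Icc hm.1 hm.2]
        exact lintegral_union_le _ _ _
    _ ≤ ENNReal.ofReal (f m - f p) + ENNReal.ofReal (f m - f q) :=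
        add_le_add (lintegral_enorm_deriv_le_of_monotoneOn hm.1 hmono)
          (lintegral_enorm_deriv_le_of_antitoneOn hm.2 hanti)
    _ ≤ ENNReal.ofReal (2 * M) := by
        rw [← ENNReal.ofReal_add (sub_nonneg.2 (hmax (left_mem_Icc.2 hpq)))
          (sub_nonneg.2 (hmax (right_mem_Icc.2 hpq)))]
        exact ENNReal.ofReal_le_ofReal (by linarith)

theorem ConcaveOn.enorm_sub_le_lintegral_enorm_deriv {f : ℝ → ℝ} {p q s t : ℝ}
    (hconc : ConcaveOn ℝ (Icc p q) f) (hs : p < s) (hst : s ≤ t) (ht : t < q) :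
    ‖f t - f s‖ₑ ≤ ∫⁻ r in Ioc s t, ‖deriv f r‖ₑ := by
  have hloc : LocallyLipschitzOn (Icc s t) f := by
    have h := hconc.locallyLipschitzOn_interior
    rw [interior_Icc] at h
    exact h.mono (Icc_subset_Ioo hs ht)
  obtain ⟨K, hK⟩ := hloc.exists_lipschitzOnWith_of_compact isCompact_Icc
  rw [← uIcc_of_le hst] at hK
  rw [← hK.absolutelyContinuousOnInterval.integral_deriv_eq_sub,
    intervalIntegral.integral_of_le hst]
  exact enorm_integral_le_lintegral_enorm _

/-- A concave function vanishing at the endpoints has total variation at least twice any of its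
values. -/
theorem ConcaveOn.le_lintegral_enorm_deriv {f : ℝ → ℝ} {p q t : ℝ}
    (hconc : ConcaveOn ℝ (Icc p q) f) (hcont : ContinuousOn f (Icc p q))
    (hp : f p = 0) (hq : f q = 0) (ht : t ∈ Icc p q) :
    ENNReal.ofReal (2 * f t) ≤ ∫⁻ r in Icc p q, ‖deriv f r‖ₑ := by
  rcases eq_or_lt_of_le ht.1 with rfl | hpt
  · simp [hp]
  rcases eq_or_lt_of_le ht.2 with rfl | htq
  · simp [hq]
  have hpq : p ≤ q := ht.1.trans ht.2
  have hleft : ‖f t‖ₑ ≤ ∫⁻ r in Ioc p t, ‖deriv f r‖ₑ := by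
    have hlim : Filter.Tendsto (fun s => ‖f t - f s‖ₑ) (nhdsWithin p (Ioo p t))
        (nhds ‖f t - f p‖ₑ) :=
      (continuous_enorm.tendsto _).comp (tendsto_const_nhds.sub
        ((hcont p (left_mem_Icc.2 hpq)).mono
          (Ioo_subset_Icc_self.trans (Icc_subset_Icc_right ht.2))))
    have : (nhdsWithin p (Ioo p t)).NeBot := left_nhdsWithin_Ioo_neBot hpt
    rw [hp, sub_zero] at hlim
    refine le_of_tendsto hlim (eventually_nhdsWithin_of_forall fun s hs => ?_)
    exact (hconc.enorm_sub_le_lintegral_enorm_deriv hs.1 hs.2.le htq).trans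
      (lintegral_mono_set (Ioc_subset_Ioc_left hs.1.le))
  have hright : ‖f t‖ₑ ≤ ∫⁻ r in Ioc t q, ‖deriv f r‖ₑ := by
    have hlim : Filter.Tendsto (fun s => ‖f s - f t‖ₑ) (nhdsWithin q (Ioo t q))
        (nhds ‖f q - f t‖ₑ) :=
      (continuous_enorm.tendsto _).comp
        (((hcont q (right_mem_Icc.2 hpq)).mono
          (Ioo_subset_Icc_self.trans (Icc_subset_Icc_left ht.1))).tendsto.sub tendsto_const_nhds)
    have : (nhdsWithin q (Ioo t q)).NeBot := right_nhdsWithin_Ioo_neBot htq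
    rw [hq, zero_sub, enorm_neg] at hlim
    refine le_of_tendsto hlim (eventually_nhdsWithin_of_forall fun s hs => ?_)
    exact (hconc.enorm_sub_le_lintegral_enorm_deriv hpt hs.1.le hs.2).trans
      (lintegral_mono_set (Ioc_subset_Ioc_right hs.2.le))
  calc ENNReal.ofReal (2 * f t) = ENNReal.ofReal (f t) + ENNReal.ofReal (f t) := by
        rw [ENNReal.ofReal_mul zero_le_two, ENNReal.ofReal_ofNat, two_mul]
    _ ≤ ‖f t‖ₑ + ‖f t‖ₑ := add_le_add (Real.ofReal_le_enorm _) (Real.ofReal_le_enorm _)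
    _ ≤ (∫⁻ r in Ioc p t, ‖deriv f r‖ₑ) + ∫⁻ r in Ioc t q, ‖deriv f r‖ₑ :=
        add_le_add hleft hright
    _ = ∫⁻ r in Ioc p q, ‖deriv f r‖ₑ := by
        rw [← Ioc_union_Ioc_eq_Ioc ht.1 ht.2,
          lintegral_union measurableSet_Ioc (Ioc_disjoint_Ioc_of_le le_rfl)]
    _ ≤ ∫⁻ r in Icc p q, ‖deriv f r‖ₑ := lintegral_mono_set Ioc_subset_Icc_self

/-- A concave function is differentiable at almost every interior point of its domain. -/
theorem ConcaveOn.ae_differentiableAt_of_mem_interior {E : Type*} [NormedAddCommGroup E]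
    [NormedSpace ℝ E] [FiniteDimensional ℝ E] [MeasurableSpace E] [BorelSpace E]
    {μ : Measure E} [μ.IsAddHaarMeasure] {s : Set E} {u : E → ℝ} (hu : ConcaveOn ℝ s u) :
    ∀ᵐ z ∂μ, z ∈ interior s → DifferentiableAt ℝ u z := by
  rw [ae_iff]
  refine measure_null_of_locally_null _ fun z hz => ?_
  simp only [mem_ofPred_eq, Classical.not_imp] at hz
  obtain ⟨K, t, ht, hK⟩ := hu.locallyLipschitzOn_interior hz.1
  rw [isOpen_interior.nhdsWithin_eq hz.1] at ht
  refine ⟨interior t ∩ _, Filter.inter_mem (mem_nhdsWithin_of_mem_nhds (interior_mem_nhds.2 ht))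
    self_mem_nhdsWithin, ?_⟩
  refine measure_mono_null ?_
    (ae_iff.1 ((hK.mono interior_subset).ae_differentiableWithinAt_of_mem (μ := μ)))
  rintro w ⟨hwt, hw⟩ hdiff
  exact hw fun _ => (hdiff hwt).differentiableAt (isOpen_interior.mem_nhds hwt)

/-- A compact convex set of reals is a closed interval. -/
theorem Convex.exists_eq_Icc {s : Set ℝ} (hs : Convex ℝ s) (hc : IsCompact s) :
    ∃ p q, s = Icc p q := by
  rcases s.eq_empty_or_nonempty with rfl | hne
  · exact ⟨1, 0, by simp⟩
  · exact ⟨_, _, eq_Icc_of_connected_compact ⟨hne, hs.isPreconnected⟩ hc⟩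

theorem Convex.exists_preimage_mk_left_eq_Icc {Ω : Set (ℝ × ℝ)} (hconv : Convex ℝ Ω)
    (hc : IsCompact Ω) (x : ℝ) : ∃ p q, (fun y => (x, y)) ⁻¹' Ω = Icc p q := by
  refine Convex.exists_eq_Icc ?_ ?_
  · intro y₁ h₁ y₂ h₂ s t hs ht hst
    have h := hconv h₁ h₂ hs ht hst
    simpa [← add_mul, hst] using h
  · refine (hc.image continuous_snd).of_isClosed_subset (hc.isClosed.preimage (by fun_prop)) ?_
    exact fun y hy => ⟨(x, y), hy, rfl⟩

theorem Convex.exists_preimage_mk_right_eq_Icc {Ω : Set (ℝ × ℝ)} (hconv : Convex ℝ Ω)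
    (hc : IsCompact Ω) (y : ℝ) : ∃ p q, (fun x => (x, y)) ⁻¹' Ω = Icc p q := by
  refine Convex.exists_eq_Icc ?_ ?_
  · intro x₁ h₁ x₂ h₂ s t hs ht hst
    have h := hconv h₁ h₂ hs ht hst
    simpa [← add_mul, hst] using h
  · refine (hc.image continuous_fst).of_isClosed_subset (hc.isClosed.preimage (by fun_prop)) ?_
    exact fun x hx => ⟨(x, y), hx, rfl⟩

theorem ConcaveOn.comp_mk_left {Ω : Set (ℝ × ℝ)} {u : ℝ × ℝ → ℝ} (hu : ConcaveOn ℝ Ω u) (x : ℝ) :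
    ConcaveOn ℝ ((fun y => (x, y)) ⁻¹' Ω) (fun y => u (x, y)) := by
  refine ⟨fun y₁ h₁ y₂ h₂ s t hs ht hst => ?_, fun y₁ h₁ y₂ h₂ s t hs ht hst => ?_⟩
  · simpa [← add_mul, hst] using hu.1 h₁ h₂ hs ht hst
  · simpa [← add_mul, hst] using hu.2 h₁ h₂ hs ht hst

theorem ConcaveOn.comp_mk_right {Ω : Set (ℝ × ℝ)} {u : ℝ × ℝ → ℝ} (hu : ConcaveOn ℝ Ω u)
    (y : ℝ) : ConcaveOn ℝ ((fun x => (x, y)) ⁻¹' Ω) (fun x => u (x, y)) := by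
  refine ⟨fun x₁ h₁ x₂ h₂ s t hs ht hst => ?_, fun x₁ h₁ x₂ h₂ s t hs ht hst => ?_⟩
  · simpa [← add_mul, hst] using hu.1 h₁ h₂ hs ht hst
  · simpa [← add_mul, hst] using hu.2 h₁ h₂ hs ht hst

theorem ux_eq_deriv {u : ℝ × ℝ → ℝ} {x y : ℝ} (hu : DifferentiableAt ℝ u (x, y)) :
    ux u (x, y) = deriv (fun s => u (s, y)) x :=
  (hu.hasFDerivAt.comp_hasDerivAt x
    ((hasDerivAt_id x).prodMk (hasDerivAt_const x y))).deriv.symm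

theorem uy_eq_deriv {u : ℝ × ℝ → ℝ} {x y : ℝ} (hu : DifferentiableAt ℝ u (x, y)) :
    uy u (x, y) = deriv (fun s => u (x, s)) y :=
  (hu.hasFDerivAt.comp_hasDerivAt y
    ((hasDerivAt_const y x).prodMk (hasDerivAt_id y))).deriv.symm

theorem enorm_ux_le (u : ℝ × ℝ → ℝ) (x y : ℝ) :
    ‖ux u (x, y)‖ₑ ≤ ‖deriv (fun s => u (s, y)) x‖ₑ := by
  by_cases hu : DifferentiableAt ℝ u (x, y)
  · rw [ux_eq_deriv hu]
  · simp [ux, fderiv_zero_of_not_differentiableAt hu]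

theorem measurable_ux (u : ℝ × ℝ → ℝ) : Measurable (ux u) :=
  measurable_fderiv_apply_const ℝ u (1, 0)

theorem measurable_uy (u : ℝ × ℝ → ℝ) : Measurable (uy u) :=
  measurable_fderiv_apply_const ℝ u (0, 1)

/-- The endpoints of a vertical section of `Ω` lie on the boundary of `Ω`. -/
theorem mem_frontier_of_preimage_mk_left_eq_Icc {Ω : Set (ℝ × ℝ)} (hc : IsClosed Ω) {x p q : ℝ}
    (hpq : p ≤ q) (hS : (fun y => (x, y)) ⁻¹' Ω = Icc p q) :
    (x, p) ∈ frontier Ω ∧ (x, q) ∈ frontier Ω := by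
  have hsub : (fun y => (x, y)) ⁻¹' interior Ω ⊆ Ioo p q := by
    rw [← interior_Icc, ← hS]
    exact preimage_interior_subset_interior_preimage (by fun_prop)
  have hmem : ∀ y ∈ Icc p q, (x, y) ∈ Ω := fun y hy => by rwa [← hS] at hy
  rw [hc.frontier_eq]
  exact ⟨⟨hmem p (left_mem_Icc.2 hpq), fun h => lt_irrefl _ (hsub h).1⟩,
    ⟨hmem q (right_mem_Icc.2 hpq), fun h => lt_irrefl _ (hsub h).2⟩⟩

/-- A concave function vanishing on the boundary of a compact convex set is nonnegative. -/
theorem ConcaveOn.nonneg_of_frontier {Ω : Set (ℝ × ℝ)} {u : ℝ × ℝ → ℝ} (hc : IsCompact Ω)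
    (hu : ConcaveOn ℝ Ω u) (h0 : ∀ z ∈ frontier Ω, u z = 0) {z : ℝ × ℝ} (hz : z ∈ Ω) :
    0 ≤ u z := by
  obtain ⟨x, y⟩ := z
  obtain ⟨p, q, hS⟩ := hu.1.exists_preimage_mk_left_eq_Icc hc x
  have hy : y ∈ Icc p q := by rw [← hS]; exact hz
  have hpq := hy.1.trans hy.2
  obtain ⟨hp, hq⟩ := mem_frontier_of_preimage_mk_left_eq_Icc hc.isClosed hpq hS
  have hconc := hu.comp_mk_left x
  rw [hS] at hconc
  have h := hconc.min_le_of_mem_Icc (left_mem_Icc.2 hpq) (right_mem_Icc.2 hpq) hy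
  simpa [h0 _ hp, h0 _ hq] using h

theorem lintegral_enorm_ux_le {Ω : Set (ℝ × ℝ)} (hc : IsCompact Ω) {c d M : ℝ}
    (hproj : Prod.snd '' Ω ⊆ Icc c d) {u : ℝ × ℝ → ℝ} (hcont : ContinuousOn u Ω)
    (hu : ConcaveOn ℝ Ω u) (hnonneg : ∀ z ∈ Ω, 0 ≤ u z) (hM : ∀ z ∈ Ω, u z ≤ M) :
    ∫⁻ z in Ω, ‖ux u z‖ₑ ≤ ENNReal.ofReal (2 * M) * ENNReal.ofReal (d - c) := by
  have hmeas := hc.isClosed.measurableSet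
  rw [← lintegral_indicator hmeas, Measure.volume_eq_prod,
    lintegral_prod_symm' _ ((measurable_ux u).enorm.indicator hmeas), ← Real.volume_Icc,
    ← lintegral_indicator_const measurableSet_Icc]
  refine lintegral_mono fun y => ?_
  by_cases hy : y ∈ Icc c d
  · rw [indicator_of_mem hy]
    obtain ⟨p, q, hS⟩ := hu.1.exists_preimage_mk_right_eq_Icc hc y
    have hmem : ∀ x ∈ Icc p q, (x, y) ∈ Ω := fun x hx => by rwa [← hS] at hx
    have hconc := hu.comp_mk_right y
    rw [hS] at hconc
    refine le_trans ?_ (hconc.lintegral_enorm_deriv_le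
      (hcont.comp (by fun_prop) hmem)
      (fun x hx => hnonneg _ (hmem x hx)) (fun x hx => hM _ (hmem x hx)))
    rw [← lintegral_indicator measurableSet_Icc, ← hS]
    exact lintegral_mono fun x => indicator_le_indicator (s := (fun x => (x, y)) ⁻¹' Ω)
      (f := fun x => ‖ux u (x, y)‖ₑ) (enorm_ux_le u x y)
  · have h : ∀ x, (x, y) ∉ Ω := fun x hx => hy (hproj ⟨_, hx, rfl⟩)
    simp [h]

/-- Almost every vertical section contributes at least twice each value of `u` on it. -/
theorem ae_le_lintegral_enorm_uy {Ω : Set (ℝ × ℝ)} (hc : IsCompact Ω) {u : ℝ × ℝ → ℝ}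
    (hcont : ContinuousOn u Ω) (hu : ConcaveOn ℝ Ω u) (h0 : ∀ z ∈ frontier Ω, u z = 0) :
    ∀ᵐ x : ℝ, ∀ t, (x, t) ∈ Ω →
      ENNReal.ofReal (2 * u (x, t)) ≤ ∫⁻ y, Ω.indicator (fun z => ‖uy u z‖ₑ) (x, y) := by
  have hdiff : ∀ᵐ z : ℝ × ℝ, z ∈ Ω → DifferentiableAt ℝ u z := by
    filter_upwards [hu.ae_differentiableAt_of_mem_interior (μ := volume),
      measure_eq_zero_iff_ae_notMem.1 (hu.1.addHaar_frontier volume)] with z hz hzf hzΩ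
    rw [hc.isClosed.frontier_eq] at hzf
    exact hz (by_contra fun h => hzf ⟨hzΩ, h⟩)
  rw [Measure.volume_eq_prod] at hdiff
  filter_upwards [Measure.ae_ae_of_ae_prod hdiff] with x hx t ht
  obtain ⟨p, q, hS⟩ := hu.1.exists_preimage_mk_left_eq_Icc hc x
  have htm : t ∈ Icc p q := by rw [← hS]; exact ht
  obtain ⟨hp, hq⟩ :=
    mem_frontier_of_preimage_mk_left_eq_Icc hc.isClosed (htm.1.trans htm.2) hS
  have hmem : ∀ y ∈ Icc p q, (x, y) ∈ Ω := fun y hy => by rwa [← hS] at hy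
  have hconc := hu.comp_mk_left x
  rw [hS] at hconc
  refine (hconc.le_lintegral_enorm_deriv (hcont.comp (by fun_prop) hmem)
    (h0 _ hp) (h0 _ hq) htm).trans ?_
  rw [← lintegral_indicator measurableSet_Icc]
  refine lintegral_mono_ae ?_
  filter_upwards [hx] with y hy
  by_cases hyS : y ∈ Icc p q
  · rw [indicator_of_mem hyS, indicator_of_mem (hmem y hyS), uy_eq_deriv (hy (hmem y hyS))]
  · simp [hyS]

/-- On the segment from a point `z₁` where `u` is nonnegative to `z₀`, the function `u` dominates
the affine function of the first coordinate vanishing at `z₁` and equal to `u z₀` at `z₀`. -/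
theorem ConcaveOn.exists_le_on_segment {Ω : Set (ℝ × ℝ)} {u : ℝ × ℝ → ℝ} (hu : ConcaveOn ℝ Ω u)
    {z₀ z₁ : ℝ × ℝ} (hz₀ : z₀ ∈ Ω) (hz₁ : z₁ ∈ Ω) (h1 : 0 ≤ u z₁) {r : ℝ} (hr : r ∈ Icc 0 1) :
    ∃ t, (z₁.1 + r * (z₀.1 - z₁.1), t) ∈ Ω ∧ r * u z₀ ≤ u (z₁.1 + r * (z₀.1 - z₁.1), t) := by
  have heq : (z₁.1 + r * (z₀.1 - z₁.1), (1 - r) * z₁.2 + r * z₀.2) = (1 - r) • z₁ + r • z₀ := by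
    ext <;> simp
    ring
  have hr' : 0 ≤ 1 - r := sub_nonneg.2 hr.2
  refine ⟨(1 - r) * z₁.2 + r * z₀.2, ?_, ?_⟩
  · rw [heq]
    exact hu.1 hz₁ hz₀ hr' hr.1 (by ring)
  · rw [heq]
    have h := hu.2 hz₁ hz₀ hr' hr.1 (by ring)
    simp only [smul_eq_mul] at h
    nlinarith [mul_nonneg hr' h1]

theorem lintegral_Ioc_affine_left {a m M : ℝ} (ham : a ≤ m) (hM : 0 ≤ M) :
    ∫⁻ x in Ioc a m, ENNReal.ofReal (2 * ((x - a) / (m - a) * M)) =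
      ENNReal.ofReal (M * (m - a)) := by
  have hcont : Continuous fun x => 2 * ((x - a) / (m - a) * M) := by fun_prop
  rw [← ofReal_integral_eq_lintegral_ofReal]
  · congr 1
    rw [← intervalIntegral.integral_of_le ham]
    rcases eq_or_lt_of_le ham with rfl | h
    · simp
    have h' : m - a ≠ 0 := (sub_pos.2 h).ne'
    have : (fun x => 2 * ((x - a) / (m - a) * M)) = fun x => (2 * M / (m - a)) * (x - a) := by
      ext x; ring
    rw [this, intervalIntegral.integral_const_mul, intervalIntegral.integral_sub (by simp) (by simp)]
    simp
    field_simp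
    ring
  · exact (hcont.integrableOn_Icc).mono_set Ioc_subset_Icc_self
  · refine (ae_restrict_mem measurableSet_Ioc).mono fun x hx => ?_
    have := sub_nonneg.2 hx.1.le
    have := sub_nonneg.2 ham
    simp only [Pi.zero_apply]
    positivity

theorem lintegral_Ioc_affine_right {m b M : ℝ} (hmb : m ≤ b) (hM : 0 ≤ M) :
    ∫⁻ x in Ioc m b, ENNReal.ofReal (2 * ((b - x) / (b - m) * M)) =
      ENNReal.ofReal (M * (b - m)) := by
  have hcont : Continuous fun x => 2 * ((b - x) / (b - m) * M) := by fun_prop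
  rw [← ofReal_integral_eq_lintegral_ofReal]
  · congr 1
    rw [← intervalIntegral.integral_of_le hmb]
    rcases eq_or_lt_of_le hmb with rfl | h
    · simp
    have h' : b - m ≠ 0 := (sub_pos.2 h).ne'
    have : (fun x => 2 * ((b - x) / (b - m) * M)) = fun x => (2 * M / (b - m)) * (b - x) := by
      ext x; ring
    rw [this, intervalIntegral.integral_const_mul, intervalIntegral.integral_sub (by simp) (by simp)]
    simp
    field_simp
    ring
  · exact (hcont.integrableOn_Icc).mono_set Ioc_subset_Icc_self
  · refine (ae_restrict_mem measurableSet_Ioc).mono fun x hx => ?_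
    have := sub_nonneg.2 hx.2
    have := sub_nonneg.2 hmb
    simp only [Pi.zero_apply]
    positivity

theorem le_lintegral_enorm_uy {Ω : Set (ℝ × ℝ)} (hc : IsCompact Ω) {u : ℝ × ℝ → ℝ}
    (hcont : ContinuousOn u Ω) (hu : ConcaveOn ℝ Ω u) (h0 : ∀ z ∈ frontier Ω, u z = 0)
    {z₀ z₁ z₂ : ℝ × ℝ} (hz₀ : z₀ ∈ Ω) (hz₁ : z₁ ∈ Ω) (hz₂ : z₂ ∈ Ω)
    (h₁ : z₁.1 ≤ z₀.1) (h₂ : z₀.1 ≤ z₂.1) :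
    ENNReal.ofReal (u z₀ * (z₂.1 - z₁.1)) ≤ ∫⁻ z in Ω, ‖uy u z‖ₑ := by
  have hmeas := hc.isClosed.measurableSet
  have hnonneg : ∀ z ∈ Ω, 0 ≤ u z := fun z hz => hu.nonneg_of_frontier hc h0 hz
  have hae := ae_le_lintegral_enorm_uy hc hcont hu h0
  rw [← lintegral_indicator hmeas, Measure.volume_eq_prod,
    lintegral_prod _ ((measurable_uy u).enorm.indicator hmeas).aemeasurable]
  set G : ℝ → ℝ≥0∞ := fun x => ∫⁻ y, Ω.indicator (fun z => ‖uy u z‖ₑ) (x, y)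
  have hleft : ENNReal.ofReal (u z₀ * (z₀.1 - z₁.1)) ≤ ∫⁻ x in Ioc z₁.1 z₀.1, G x := by
    rw [← lintegral_Ioc_affine_left h₁ (hnonneg _ hz₀)]
    refine lintegral_mono_ae ((ae_restrict_iff' measurableSet_Ioc).2 ?_)
    filter_upwards [hae] with x hx hxI
    have hpos : 0 < z₀.1 - z₁.1 := sub_pos.2 (hxI.1.trans_le hxI.2)
    obtain ⟨t, ht, hut⟩ := hu.exists_le_on_segment hz₀ hz₁ (hnonneg _ hz₁)
      (r := (x - z₁.1) / (z₀.1 - z₁.1))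
      ⟨div_nonneg (sub_nonneg.2 hxI.1.le) hpos.le,
        (div_le_one hpos).2 (sub_le_sub_right hxI.2 _)⟩
    rw [div_mul_cancel₀ _ hpos.ne', add_sub_cancel] at ht hut
    exact (ENNReal.ofReal_le_ofReal (by linarith)).trans (hx t ht)
  have hright : ENNReal.ofReal (u z₀ * (z₂.1 - z₀.1)) ≤ ∫⁻ x in Ioc z₀.1 z₂.1, G x := by
    rw [← lintegral_Ioc_affine_right h₂ (hnonneg _ hz₀)]
    refine lintegral_mono_ae ((ae_restrict_iff' measurableSet_Ioc).2 ?_)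
    filter_upwards [hae] with x hx hxI
    have hpos : 0 < z₂.1 - z₀.1 := sub_pos.2 (hxI.1.trans_le hxI.2)
    obtain ⟨t, ht, hut⟩ := hu.exists_le_on_segment hz₀ hz₂ (hnonneg _ hz₂)
      (r := (z₂.1 - x) / (z₂.1 - z₀.1))
      ⟨div_nonneg (sub_nonneg.2 hxI.2) hpos.le,
        (div_le_one hpos).2 (sub_le_sub_left hxI.1.le _)⟩
    have heq : z₂.1 + (z₂.1 - x) / (z₂.1 - z₀.1) * (z₀.1 - z₂.1) = x := by
      rw [← neg_sub z₂.1 z₀.1, mul_neg, div_mul_cancel₀ _ hpos.ne']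
      ring
    rw [heq] at ht hut
    exact (ENNReal.ofReal_le_ofReal (by linarith)).trans (hx t ht)
  calc ENNReal.ofReal (u z₀ * (z₂.1 - z₁.1))
      = ENNReal.ofReal (u z₀ * (z₀.1 - z₁.1)) + ENNReal.ofReal (u z₀ * (z₂.1 - z₀.1)) := by
        rw [← ENNReal.ofReal_add (mul_nonneg (hnonneg _ hz₀) (sub_nonneg.2 h₁))
          (mul_nonneg (hnonneg _ hz₀) (sub_nonneg.2 h₂))]
        ring_nf
    _ ≤ (∫⁻ x in Ioc z₁.1 z₀.1, G x) + ∫⁻ x in Ioc z₀.1 z₂.1, G x := add_le_add hleft hright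
    _ = ∫⁻ x in Ioc z₁.1 z₀.1 ∪ Ioc z₀.1 z₂.1, G x :=
        (lintegral_union measurableSet_Ioc (Ioc_disjoint_Ioc_of_le le_rfl)).symm
    _ ≤ ∫⁻ x, G x := setLIntegral_le_lintegral _ _

theorem L1N_eq_toReal_lintegral (Ω : Set (ℝ × ℝ)) {f : ℝ × ℝ → ℝ} (hf : Measurable f) :
    L1N Ω f = (∫⁻ z in Ω, ‖f z‖ₑ).toReal :=
  integral_norm_eq_lintegral_enorm hf.aestronglyMeasurable

theorem MemU.lintegral_enorm_uy_ne_top {Ω : Set (ℝ × ℝ)} {u : ℝ × ℝ → ℝ} (hu : MemU Ω u)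
    (hc : IsCompact Ω) : ∫⁻ z in Ω, ‖uy u z‖ₑ ≠ ∞ := by
  obtain ⟨-, hconc, -, C, hC⟩ := hu
  have hbound : ∀ᵐ z ∂volume.restrict Ω, ‖uy u z‖ ≤ max C 0 * ‖((0 : ℝ), (1 : ℝ))‖ := by
    rw [ae_restrict_iff' hc.isClosed.measurableSet]
    filter_upwards [measure_eq_zero_iff_ae_notMem.1 (hconc.1.addHaar_frontier volume)]
      with z hzf hzΩ
    rw [hc.isClosed.frontier_eq] at hzf
    have hz : z ∈ interior Ω := by_contra fun h => hzf ⟨hzΩ, h⟩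
    refine (fderiv ℝ u z).le_of_opNorm_le ?_ _
    by_cases hd : DifferentiableAt ℝ u z
    · exact (hC z hz _ hd.hasFDerivAt).trans (le_max_left _ _)
    · simp [fderiv_zero_of_not_differentiableAt hd]
  exact (Measure.integrableOn_of_bounded hc.measure_lt_top.ne
    (measurable_uy u).aestronglyMeasurable hbound).2.ne

/-- Theorem 1: `‖u_x‖₁ ≤ 2 (w_y / w_x) ‖u_y‖₁`, where `w_x = b - a` and
`w_y = d - c` are the lengths of the projections of `Ω` to the two coordinate axes. -/
theorem stmt_4 (Ω : Set (ℝ × ℝ)) (hΩc : IsCompact Ω) (hΩconv : Convex ℝ Ω)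
    (hΩint : (interior Ω).Nonempty)
    (a b c d : ℝ)
    (hprojx : (fun z : ℝ × ℝ => z.1) '' Ω = Icc a b)
    (hprojy : (fun z : ℝ × ℝ => z.2) '' Ω = Icc c d)
    (u : ℝ × ℝ → ℝ) (hu : MemU Ω u) :
    L1N Ω (ux u) ≤ 2 * ((d - c) / (b - a)) * L1N Ω (uy u) := by
  obtain ⟨hcont, hconc, h0, -⟩ := id hu
  have hne : Ω.Nonempty := hΩint.mono interior_subset
  obtain ⟨z₀, hz₀, hmax⟩ := hΩc.exists_isMaxOn hne hcont
  have hnonneg : ∀ z ∈ Ω, 0 ≤ u z := fun z hz => hconc.nonneg_of_frontier hΩc h0 hz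
  have hx : ∀ z ∈ Ω, z.1 ∈ Icc a b := fun z hz => hprojx ▸ mem_image_of_mem _ hz
  have hcd : c ≤ d := nonempty_Icc.1 (hprojy ▸ hne.image _)
  have hab : a < b := by
    obtain ⟨z, hz⟩ := hΩint
    have hsub : interior Ω ⊆ Prod.fst ⁻¹' Ioo a b := by
      rw [← interior_Icc]
      exact (interior_mono (t := Prod.fst ⁻¹' Icc a b) hx).trans
        isOpenMap_fst.interior_preimage_subset_preimage_interior
    exact (hsub hz).1.trans (hsub hz).2
  have ha : a ∈ (fun z : ℝ × ℝ => z.1) '' Ω := hprojx ▸ left_mem_Icc.2 hab.le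
  have hb : b ∈ (fun z : ℝ × ℝ => z.1) '' Ω := hprojx ▸ right_mem_Icc.2 hab.le
  obtain ⟨z₁, hz₁, rfl⟩ := ha
  obtain ⟨z₂, hz₂, rfl⟩ := hb
  have hupper := lintegral_enorm_ux_le hΩc hprojy.subset hcont hconc hnonneg hmax
  have hlower := le_lintegral_enorm_uy hΩc hcont hconc h0 hz₀ hz₁ hz₂ (hx z₀ hz₀).1 (hx z₀ hz₀).2
  have hux : L1N Ω (ux u) ≤ 2 * u z₀ * (d - c) := by
    have hM : 0 ≤ 2 * u z₀ := mul_nonneg zero_le_two (hnonneg z₀ hz₀)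
    rw [← ENNReal.ofReal_mul hM] at hupper
    rw [L1N_eq_toReal_lintegral Ω (measurable_ux u)]
    exact ENNReal.toReal_le_of_le_ofReal (mul_nonneg hM (sub_nonneg.2 hcd)) hupper
  have huy : u z₀ * (z₂.1 - z₁.1) ≤ L1N Ω (uy u) := by
    rw [L1N_eq_toReal_lintegral Ω (measurable_uy u)]
    exact (ENNReal.ofReal_le_iff_le_toReal (hu.lintegral_enorm_uy_ne_top hΩc)).1 hlower
  have hw : 0 < z₂.1 - z₁.1 := sub_pos.2 hab
  calc L1N Ω (ux u) ≤ 2 * u z₀ * (d - c) := hux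
    _ = 2 * ((d - c) / (z₂.1 - z₁.1)) * (u z₀ * (z₂.1 - z₁.1)) := by
        field_simp
    _ ≤ 2 * ((d - c) / (z₂.1 - z₁.1)) * L1N Ω (uy u) :=
        mul_le_mul_of_nonneg_left huy
          (mul_nonneg zero_le_two (div_nonneg (sub_nonneg.2 hcd) hw.le))
end

section
/- Let w_x and w_y denote the lengths of the orthogonal projections of Ω onto the x-axis and onto the y-axis, respectively. Then sup{ ‖u_x‖₁ / ‖u_y‖₁ : u ∈ 𝒰_Ω, u ≢ 0 } = 2 w_y / w_x if and only if Ω contains a vertical segment of length w_y, i.e. a vertical segment whose endpoints lie on the two horizontal lines of support of Ω (the horizontal sides of the circumscribed axis-parallel rectangle). -/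
open Set MeasureTheory
open scoped ENNReal

/-- A concave function on a compact interval that vanishes at both endpoints has total variation
(the integral of the modulus of its right derivative) equal to twice its maximum. -/
lemma ConcaveOn.exists_isMaxOn_integral_abs_rightDeriv {f : ℝ → ℝ} {α β : ℝ} (hαβ : α ≤ β)
    (hc : ContinuousOn f (Icc α β)) (hf : ConcaveOn ℝ (Icc α β) f) (hα : f α = 0) (hβ : f β = 0) :
    ∃ m ∈ Icc α β, IsMaxOn f (Icc α β) m ∧
      ∫ x in Icc α β, |derivWithin f (Ioi x) x| = 2 * f m := by
  obtain ⟨m, hm, hmax⟩ := isCompact_Icc.exists_isMaxOn (nonempty_Icc.2 hαβ) hc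
  refine ⟨m, hm, hmax, ?_⟩
  have hderiv : ∀ x ∈ Ioo α β, HasDerivWithinAt f (derivWithin f (Ioi x) x) (Ioi x) x := by
    intro x hx
    have := hf.neg.differentiableWithinAt_Ioi_of_mem_interior (x := x) (by rwa [interior_Icc])
    simpa using this.neg.hasDerivWithinAt
  have hleft : ∀ x ∈ Ioo α m, 0 ≤ derivWithin f (Ioi x) x := by
    intro x hx
    have hx' : x ∈ Icc α β := ⟨hx.1.le, hx.2.le.trans hm.2⟩
    have h1 := hf.slope_le_of_hasDerivWithinAt_Ioi hx' hm hx.2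
      (hderiv x ⟨hx.1, hx.2.trans_le hm.2⟩)
    refine le_trans ?_ h1
    rw [slope_def_field]
    exact div_nonneg (sub_nonneg.2 (hmax hx')) (sub_nonneg.2 hx.2.le)
  have hright : ∀ x ∈ Ioo m β, derivWithin f (Ioi x) x ≤ 0 := by
    intro x hx
    have hd := hderiv x ⟨hm.1.trans_lt hx.1, hx.2⟩
    have hlim := hasDerivWithinAt_iff_tendsto_slope.1 hd
    have hsdiff : Ioi x \ {x} = Ioi x := by simp
    rw [hsdiff] at hlim
    refine le_of_tendsto hlim ?_
    filter_upwards [Ioo_mem_nhdsGT hx.2] with y hy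
    have hy' : y ∈ Icc α β := ⟨hm.1.trans (hx.1.trans hy.1).le, hy.2.le⟩
    have hx' : x ∈ Icc α β := ⟨hm.1.trans hx.1.le, hx.2.le⟩
    have h1 := hf.slope_anti_adjacent hm hy' hx.1 hy.1
    rw [slope_def_field]
    refine h1.trans (div_nonpos_of_nonpos_of_nonneg (sub_nonpos.2 (hmax hx')) ?_)
    linarith [hx.1]
  have hcL : ContinuousOn f (Icc α m) := hc.mono (Icc_subset_Icc_right hm.2)
  have hcR : ContinuousOn f (Icc m β) := hc.mono (Icc_subset_Icc_left hm.1)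
  have hdL : ∀ x ∈ Ioo α m, HasDerivWithinAt f (derivWithin f (Ioi x) x) (Ioi x) x :=
    fun x hx => hderiv x ⟨hx.1, hx.2.trans_le hm.2⟩
  have hdR : ∀ x ∈ Ioo m β, HasDerivWithinAt (-f) (-derivWithin f (Ioi x) x) (Ioi x) x :=
    fun x hx => (hderiv x ⟨hm.1.trans_lt hx.1, hx.2⟩).neg
  have hiL : IntervalIntegrable (fun x => derivWithin f (Ioi x) x) volume α m :=
    (intervalIntegrable_iff_integrableOn_Ioc_of_le hm.1).2
      (intervalIntegral.integrableOn_deriv_right_of_nonneg hcL hdL hleft)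
  have hiR : IntervalIntegrable (fun x => -derivWithin f (Ioi x) x) volume m β :=
    (intervalIntegrable_iff_integrableOn_Ioc_of_le hm.2).2
      (intervalIntegral.integrableOn_deriv_right_of_nonneg hcR.neg hdR
        fun x hx => neg_nonneg.2 (hright x hx))
  have hL := intervalIntegral.integral_eq_sub_of_hasDeriv_right_of_le hm.1 hcL hdL hiL
  have hR := intervalIntegral.integral_eq_sub_of_hasDeriv_right_of_le hm.2 hcR.neg hdR hiR
  have heL : ∫ x in α..m, |derivWithin f (Ioi x) x| = ∫ x in α..m, derivWithin f (Ioi x) x := by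
    rw [intervalIntegral.integral_of_le hm.1, intervalIntegral.integral_of_le hm.1,
      integral_Ioc_eq_integral_Ioo, integral_Ioc_eq_integral_Ioo]
    exact setIntegral_congr_fun measurableSet_Ioo fun x hx => abs_of_nonneg (hleft x hx)
  have heR : ∫ x in m..β, |derivWithin f (Ioi x) x| = ∫ x in m..β, -derivWithin f (Ioi x) x := by
    rw [intervalIntegral.integral_of_le hm.2, intervalIntegral.integral_of_le hm.2,
      integral_Ioc_eq_integral_Ioo, integral_Ioc_eq_integral_Ioo]
    exact setIntegral_congr_fun measurableSet_Ioo fun x hx => abs_of_nonpos (hright x hx)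
  have hiR' : IntervalIntegrable (fun x => |derivWithin f (Ioi x) x|) volume m β := by
    simpa using hiR.abs
  rw [integral_Icc_eq_integral_Ioc, ← intervalIntegral.integral_of_le hαβ,
    ← intervalIntegral.integral_add_adjacent_intervals hiL.abs hiR', heL, heR, hL, hR]
  simp only [Pi.neg_apply, hα, hβ]
  ring

/-- A concave function on a set is differentiable at almost every interior point of the set. -/
lemma ConcaveOn.ae_differentiableAt_of_mem_interior_s5 {Ω : Set (ℝ × ℝ)} {u : ℝ × ℝ → ℝ}
    (hu : ConcaveOn ℝ Ω u) : ∀ᵐ z, z ∈ interior Ω → DifferentiableAt ℝ u z := by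
  rw [ae_iff]
  refine measure_null_of_locally_null _ fun z hz => ?_
  simp only [mem_ofPred_eq, Classical.not_imp] at hz
  obtain ⟨K, t, ht, hK⟩ := hu.locallyLipschitzOn_interior hz.1
  rw [isOpen_interior.nhdsWithin_eq hz.1] at ht
  have h := hK.ae_differentiableWithinAt_of_mem (μ := volume)
  rw [ae_iff] at h
  refine ⟨_, inter_mem_nhdsWithin _ (interior_mem_nhds.2 ht), measure_mono_null ?_ h⟩
  rintro w ⟨hw, hwt⟩
  simp only [mem_ofPred_eq, Classical.not_imp] at hw ⊢
  exact ⟨interior_subset hwt, fun hd => hw.2 (hd.differentiableAt (mem_interior_iff_mem_nhds.1 hwt))⟩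

/-- A vertical slice of a compact convex set is a compact interval, with endpoints on the
frontier. -/
lemma Convex.exists_slice_eq_Icc {Ω : Set (ℝ × ℝ)} (hΩc : IsCompact Ω) (hΩ : Convex ℝ Ω)
    {x y : ℝ} (hxy : (x, y) ∈ Ω) :
    ∃ α β : ℝ, α ≤ β ∧ (fun t => (x, t)) ⁻¹' Ω = Icc α β ∧
      (x, α) ∈ frontier Ω ∧ (x, β) ∈ frontier Ω := by
  have hcont : Continuous fun t : ℝ => (x, t) := by fun_prop
  set S := (fun t : ℝ => (x, t)) ⁻¹' Ω with hS
  have hSconv : Convex ℝ S := by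
    intro s hs t ht p q hp hq hpq
    have := hΩ hs ht hp hq hpq
    simp only [Prod.smul_mk, Prod.mk_add_mk, smul_eq_mul] at this
    rw [← add_mul, hpq, one_mul] at this
    simpa [hS] using this
  have hScomp : IsCompact S := by
    refine (hΩc.image continuous_snd).of_isClosed_subset (hΩc.isClosed.preimage hcont) ?_
    exact fun t ht => ⟨(x, t), ht, rfl⟩
  have hSne : S.Nonempty := ⟨y, hxy⟩
  have hIcc := eq_Icc_of_connected_compact ⟨hSne, hSconv.isPreconnected⟩ hScomp
  have hle : sInf S ≤ sSup S := csInf_le_csSup hSne hScomp.bddBelow hScomp.bddAbove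
  have hfr : ∀ t ∈ S, t ∉ interior S → (x, t) ∈ frontier Ω := by
    intro t ht h_interior
    rw [hΩc.isClosed.frontier_eq]
    exact ⟨ht, fun h => h_interior (preimage_interior_subset_interior_preimage hcont h)⟩
  have hend : ∀ t ∈ S, t ∉ Ioo (sInf S) (sSup S) → (x, t) ∈ frontier Ω := by
    intro t ht h
    refine hfr t ht fun h' => h ?_
    rw [hIcc, interior_Icc] at h'
    exact h'
  exact ⟨sInf S, sSup S, hle, hIcc, hend _ (hScomp.sInf_mem hSne) (by simp),
    hend _ (hScomp.sSup_mem hSne) (by simp)⟩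

/-- A function in `𝒰_Ω` is nonnegative on `Ω`. -/
lemma MemU.nonneg {Ω : Set (ℝ × ℝ)} {u : ℝ × ℝ → ℝ} (hu : MemU Ω u) (hΩc : IsCompact Ω)
    {z : ℝ × ℝ} (hz : z ∈ Ω) : 0 ≤ u z := by
  obtain ⟨x, y⟩ := z
  obtain ⟨α, β, hαβ, hS, hα, hβ⟩ := hu.2.1.1.exists_slice_eq_Icc hΩc hz
  have hy : y ∈ Icc α β := hS ▸ hz
  have hf := hΩc.isClosed.frontier_subset
  have hseg : (x, y) ∈ segment ℝ ((x, α) : ℝ × ℝ) (x, β) := by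
    rw [← Prod.image_mk_segment_right, segment_eq_Icc hαβ]
    exact ⟨y, hy, rfl⟩
  have := hu.2.1.min_le_of_mem_segment (hf hα) (hf hβ) hseg
  rwa [hu.2.2.1 _ hα, hu.2.2.1 _ hβ, min_self] at this

lemma MemU.integrable_indicator_abs_uy {Ω : Set (ℝ × ℝ)} {u : ℝ × ℝ → ℝ} (hu : MemU Ω u)
    (hΩc : IsCompact Ω) : Integrable (Ω.indicator fun z => |uy u z|) := by
  obtain ⟨C, hC⟩ := hu.2.2.2
  rw [integrable_indicator_iff hΩc.measurableSet]
  have hfr := hu.2.1.1.addHaar_frontier (volume : Measure (ℝ × ℝ))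
  refine Measure.integrableOn_of_bounded (M := max C 0 * ‖((0, 1) : ℝ × ℝ)‖) hΩc.measure_ne_top
    (measurable_fderiv_apply_const ℝ u (0, 1)).abs.aestronglyMeasurable ?_
  rw [ae_restrict_iff' hΩc.measurableSet]
  filter_upwards [measure_eq_zero_iff_ae_notMem.1 hfr] with z hz hzΩ
  have h_interior : z ∈ interior Ω := by
    by_contra h
    exact hz (hΩc.isClosed.frontier_eq ▸ ⟨hzΩ, h⟩)
  rw [Real.norm_eq_abs, abs_abs, ← Real.norm_eq_abs]
  refine ((fderiv ℝ u z).le_opNorm _).trans ?_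
  gcongr
  by_cases hd : DifferentiableAt ℝ u z
  · exact (hC z h_interior _ hd.hasFDerivAt).trans (le_max_left _ _)
  · simp [fderiv_zero_of_not_differentiableAt hd]

/-- The integral of `|u_y|` over almost every vertical slice of `Ω` is twice the maximum of `u` on
the slice. -/
lemma MemU.ae_integral_slice {Ω : Set (ℝ × ℝ)} {u : ℝ × ℝ → ℝ} (hu : MemU Ω u)
    (hΩc : IsCompact Ω) : ∀ᵐ x : ℝ, ∀ y, (x, y) ∈ Ω → ∃ m, (x, m) ∈ Ω ∧
      (∀ t, (x, t) ∈ Ω → u (x, t) ≤ u (x, m)) ∧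
      ∫ t, Ω.indicator (fun z => |uy u z|) (x, t) = 2 * u (x, m) := by
  have hfr := measure_eq_zero_iff_ae_notMem.1
    (hu.2.1.1.addHaar_frontier (volume : Measure (ℝ × ℝ)))
  have hdiff := hu.2.1.ae_differentiableAt_of_mem_interior_s5
  have hae : ∀ᵐ z : ℝ × ℝ, z ∈ Ω → DifferentiableAt ℝ u z := by
    filter_upwards [hfr, hdiff] with z hz hz' hzΩ
    refine hz' ?_
    by_contra h
    exact hz (hΩc.isClosed.frontier_eq ▸ ⟨hzΩ, h⟩)
  rw [Measure.volume_eq_prod] at hae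
  filter_upwards [Measure.ae_ae_of_ae_prod hae] with x hx y hy
  obtain ⟨α, β, hαβ, hS, hα, hβ⟩ := hu.2.1.1.exists_slice_eq_Icc hΩc hy
  have hmem : ∀ t, (x, t) ∈ Ω ↔ t ∈ Icc α β := fun t => by rw [← hS]; rfl
  have hc : ContinuousOn (fun t => u (x, t)) (Icc α β) :=
    hu.1.comp (by fun_prop) fun t ht => (hmem t).2 ht
  have hconc : ConcaveOn ℝ (Icc α β) fun t => u (x, t) := by
    refine ⟨convex_Icc _ _, fun s hs t ht p q hp hq hpq => ?_⟩
    have := hu.2.1.2 ((hmem s).2 hs) ((hmem t).2 ht) hp hq hpq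
    simp only [Prod.smul_mk, Prod.mk_add_mk, smul_eq_mul] at this ⊢
    rwa [← add_mul, hpq, one_mul] at this
  obtain ⟨m, hm, hmax, h_interior⟩ := hconc.exists_isMaxOn_integral_abs_rightDeriv hαβ hc
    (hu.2.2.1 _ hα) (hu.2.2.1 _ hβ)
  refine ⟨m, (hmem m).2 hm, fun t ht => hmax ((hmem t).1 ht), ?_⟩
  rw [← h_interior, ← integral_indicator measurableSet_Icc]
  refine integral_congr_ae ?_
  filter_upwards [hx] with t ht
  by_cases htS : t ∈ Icc α β
  · rw [indicator_of_mem htS, indicator_of_mem ((hmem t).2 htS)]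
    have hline : HasDerivAt (fun t : ℝ => (x, t)) ((0, 1) : ℝ × ℝ) t :=
      (hasDerivAt_const t x).prodMk (hasDerivAt_id t)
    have h := (ht ((hmem t).2 htS)).hasFDerivAt.comp_hasDerivAt t hline
    have h' := h.hasDerivWithinAt (s := Ioi t) |>.derivWithin (uniqueDiffWithinAt_Ioi t)
    rw [uy, ← h']
    rfl
  · rw [indicator_of_notMem htS, indicator_of_notMem fun h => htS ((hmem t).1 h)]

/-- The integral of `|u_y|` over the vertical slice of `Ω` at abscissa `x`. -/
noncomputable def sliceIntegral (Ω : Set (ℝ × ℝ)) (u : ℝ × ℝ → ℝ) (x : ℝ) : ℝ :=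
  ∫ t, Ω.indicator (fun z => |uy u z|) (x, t)

lemma MemU.integrable_sliceIntegral {Ω : Set (ℝ × ℝ)} {u : ℝ × ℝ → ℝ} (hu : MemU Ω u)
    (hΩc : IsCompact Ω) : Integrable (sliceIntegral Ω u) :=
  (hu.integrable_indicator_abs_uy hΩc).integral_prod_left

lemma MemU.L1N_uy_eq {Ω : Set (ℝ × ℝ)} {u : ℝ × ℝ → ℝ} (hu : MemU Ω u) (hΩc : IsCompact Ω)
    {a b : ℝ} (hab : a ≤ b) (hproj : (fun z : ℝ × ℝ => z.1) '' Ω = Icc a b) :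
    L1N Ω (uy u) = ∫ x in a..b, sliceIntegral Ω u x := by
  have hfub : L1N Ω (uy u) = ∫ x, sliceIntegral Ω u x := by
    rw [L1N, ← integral_indicator hΩc.measurableSet]
    exact integral_prod _ (hu.integrable_indicator_abs_uy hΩc)
  rw [hfub, intervalIntegral.integral_of_le hab, ← integral_Icc_eq_integral_Ioc,
    setIntegral_eq_integral_of_forall_compl_eq_zero]
  intro x hx
  have hnot : ∀ t, (x, t) ∉ Ω := fun t ht => hx (hproj ▸ ⟨(x, t), ht, rfl⟩)
  simp [sliceIntegral, hnot]

lemma integral_two_mul_affine (k l p q : ℝ) :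
    ∫ x in p..q, 2 * (k * x + l) = (q - p) * ((k * p + l) + (k * q + l)) := by
  rw [intervalIntegral.integral_const_mul, intervalIntegral.integral_add
    (by apply Continuous.intervalIntegrable; fun_prop) (by simp),
    intervalIntegral.integral_const_mul, integral_id, intervalIntegral.integral_const, smul_eq_mul]
  ring

/-- An affine upper bound for `u` over a strip bounds the integral of `|u_y|` over that strip. -/
lemma MemU.integral_sliceIntegral_le {Ω : Set (ℝ × ℝ)} {u : ℝ × ℝ → ℝ} (hu : MemU Ω u)
    (hΩc : IsCompact Ω) {p q k l : ℝ} (hpq : p ≤ q)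
    (hproj : Icc p q ⊆ (fun z : ℝ × ℝ => z.1) '' Ω)
    (hle : ∀ z ∈ Ω, z.1 ∈ Icc p q → u z ≤ k * z.1 + l) :
    ∫ x in p..q, sliceIntegral Ω u x ≤ (q - p) * ((k * p + l) + (k * q + l)) := by
  rw [← integral_two_mul_affine]
  refine intervalIntegral.integral_mono_ae_restrict hpq
    (hu.integrable_sliceIntegral hΩc).intervalIntegrable
    (by apply Continuous.intervalIntegrable; fun_prop) ?_
  rw [Filter.EventuallyLE, ae_restrict_iff' measurableSet_Icc]
  filter_upwards [hu.ae_integral_slice hΩc] with x hx hxpq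
  obtain ⟨z, hz, rfl⟩ := hproj hxpq
  obtain ⟨m, hm, -, hI⟩ := hx z.2 hz
  rw [sliceIntegral, hI]
  have := hle _ hm hxpq
  dsimp only at this ⊢
  linarith

/-- The integral of `|u_y|` over the strip spanned by two points of `Ω` is bounded below by the
trapezoidal area given by the values of `u` at these points. -/
lemma MemU.le_integral_sliceIntegral {Ω : Set (ℝ × ℝ)} {u : ℝ × ℝ → ℝ} (hu : MemU Ω u)
    (hΩc : IsCompact Ω) {P Q : ℝ × ℝ} (hP : P ∈ Ω) (hQ : Q ∈ Ω) (hPQ : P.1 ≤ Q.1) :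
    (Q.1 - P.1) * (u P + u Q) ≤ ∫ x in P.1..Q.1, sliceIntegral Ω u x := by
  rcases hPQ.eq_or_lt with h | h
  · simp [h]
  have hpos : 0 < Q.1 - P.1 := sub_pos.2 h
  set k := (u Q - u P) / (Q.1 - P.1) with hk
  set l := u P - k * P.1 with hl
  have hkP : k * P.1 + l = u P := by rw [hl]; ring
  have hkQ : k * Q.1 + l = u Q := by
    have : k * (Q.1 - P.1) = u Q - u P := by rw [hk]; field_simp
    rw [hl]; linarith
  rw [← hkP, ← hkQ, ← integral_two_mul_affine]
  refine intervalIntegral.integral_mono_ae_restrict hPQ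
    (by apply Continuous.intervalIntegrable; fun_prop)
    (hu.integrable_sliceIntegral hΩc).intervalIntegrable ?_
  rw [Filter.EventuallyLE, ae_restrict_iff' measurableSet_Icc]
  filter_upwards [hu.ae_integral_slice hΩc] with x hx hxPQ
  have hs : 0 ≤ (Q.1 - x) / (Q.1 - P.1) := div_nonneg (sub_nonneg.2 hxPQ.2) hpos.le
  have ht : 0 ≤ (x - P.1) / (Q.1 - P.1) := div_nonneg (sub_nonneg.2 hxPQ.1) hpos.le
  have hst : (Q.1 - x) / (Q.1 - P.1) + (x - P.1) / (Q.1 - P.1) = 1 := by field_simp; ring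
  have hmem := hu.2.1.1 hP hQ hs ht hst
  have hval := hu.2.1.2 hP hQ hs ht hst
  set z := ((Q.1 - x) / (Q.1 - P.1)) • P + ((x - P.1) / (Q.1 - P.1)) • Q with hz
  have hz1 : z.1 = x := by
    simp only [hz, Prod.fst_add, Prod.smul_fst, smul_eq_mul]
    field_simp
    ring
  have hzeq : z = (x, z.2) := Prod.ext hz1 rfl
  rw [hzeq] at hmem hval
  obtain ⟨m, hm, hmax, hI⟩ := hx _ hmem
  have h2 : k * x + l ≤ u (x, z.2) := by
    refine le_trans (le_of_eq ?_) hval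
    simp only [smul_eq_mul]
    rw [← hkP, ← hkQ]
    simp only [hz, Prod.fst_add, Prod.smul_fst, smul_eq_mul] at hz1
    linear_combination (-k) * hz1 - l * hst
  rw [sliceIntegral, hI]
  linarith [hmax _ hmem]

/-- If `u ≥ h` at two points of `Ω` then `‖u_y‖₁` is at least twice the area of a trapezoid. -/
lemma MemU.le_L1N_uy {Ω : Set (ℝ × ℝ)} {u : ℝ × ℝ → ℝ} (hu : MemU Ω u) (hΩc : IsCompact Ω)
    {a b : ℝ} (hproj : (fun z : ℝ × ℝ => z.1) '' Ω = Icc a b) {P Q : ℝ × ℝ} (hP : P ∈ Ω)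
    (hQ : Q ∈ Ω) {h : ℝ} (hhP : h ≤ u P) (hhQ : h ≤ u Q) :
    h * ((b - a) + |Q.1 - P.1|) ≤ L1N Ω (uy u) := by
  wlog hPQ : P.1 ≤ Q.1 generalizing P Q
  · rw [abs_sub_comm]
    exact this hQ hP hhQ hhP (le_of_not_ge hPQ)
  rw [abs_of_nonneg (sub_nonneg.2 hPQ)]
  have hPab : P.1 ∈ Icc a b := hproj ▸ ⟨P, hP, rfl⟩
  have hQab : Q.1 ∈ Icc a b := hproj ▸ ⟨Q, hQ, rfl⟩
  have hab : a ≤ b := hPab.1.trans hPab.2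
  obtain ⟨A, hA, rfl⟩ : a ∈ (fun z : ℝ × ℝ => z.1) '' Ω := hproj ▸ left_mem_Icc.2 hab
  obtain ⟨B, hB, rfl⟩ : b ∈ (fun z : ℝ × ℝ => z.1) '' Ω := hproj ▸ right_mem_Icc.2 hab
  have hi : ∀ p q : ℝ, IntervalIntegrable (sliceIntegral Ω u) volume p q := fun p q =>
    (hu.integrable_sliceIntegral hΩc).intervalIntegrable
  rw [hu.L1N_uy_eq hΩc hab hproj, ← intervalIntegral.integral_add_adjacent_intervals
    (hi A.1 P.1) (hi P.1 B.1), ← intervalIntegral.integral_add_adjacent_intervals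
    (hi P.1 Q.1) (hi Q.1 B.1)]
  have h1 := hu.le_integral_sliceIntegral hΩc hA hP hPab.1
  have h2 := hu.le_integral_sliceIntegral hΩc hP hQ hPQ
  have h3 := hu.le_integral_sliceIntegral hΩc hQ hB hQab.2
  have hA0 := hu.nonneg hΩc hA
  have hB0 := hu.nonneg hΩc hB
  have e1 : (P.1 - A.1) * h ≤ (P.1 - A.1) * (u A + u P) :=
    mul_le_mul_of_nonneg_left (by linarith) (sub_nonneg.2 hPab.1)
  have e2 : (Q.1 - P.1) * (h + h) ≤ (Q.1 - P.1) * (u P + u Q) :=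
    mul_le_mul_of_nonneg_left (by linarith) (sub_nonneg.2 hPQ)
  have e3 : (B.1 - Q.1) * h ≤ (B.1 - Q.1) * (u Q + u B) :=
    mul_le_mul_of_nonneg_left (by linarith) (sub_nonneg.2 hQab.2)
  dsimp only at *
  linarith

/-- A piecewise affine upper bound for `u` in terms of the abscissa bounds `‖u_y‖₁`. -/
lemma MemU.L1N_uy_le {Ω : Set (ℝ × ℝ)} {u : ℝ × ℝ → ℝ} (hu : MemU Ω u) (hΩc : IsCompact Ω)
    {a b : ℝ} (hproj : (fun z : ℝ × ℝ => z.1) '' Ω = Icc a b) {p k l k' l' : ℝ}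
    (hp : p ∈ Icc a b) (hle : ∀ z ∈ Ω, z.1 ≤ p → u z ≤ k * z.1 + l)
    (hle' : ∀ z ∈ Ω, p ≤ z.1 → u z ≤ k' * z.1 + l') :
    L1N Ω (uy u) ≤ (p - a) * ((k * a + l) + (k * p + l)) +
      (b - p) * ((k' * p + l') + (k' * b + l')) := by
  have hi : ∀ p q : ℝ, IntervalIntegrable (sliceIntegral Ω u) volume p q := fun p q =>
    (hu.integrable_sliceIntegral hΩc).intervalIntegrable
  rw [hu.L1N_uy_eq hΩc (hp.1.trans hp.2) hproj,
    ← intervalIntegral.integral_add_adjacent_intervals (hi a p) (hi p b)]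
  exact add_le_add
    (hu.integral_sliceIntegral_le hΩc hp.1 (hproj ▸ Icc_subset_Icc_right hp.2)
      fun z hz h => hle z hz h.2)
    (hu.integral_sliceIntegral_le hΩc hp.2 (hproj ▸ Icc_subset_Icc_left hp.1)
      fun z hz h => hle' z hz h.1)

/-- The class `𝒰_Ω` is compatible with exchanging the coordinates. -/
lemma MemU.comp_swap {Ω : Set (ℝ × ℝ)} {u : ℝ × ℝ → ℝ} (hu : MemU Ω u) :
    MemU (Prod.swap ⁻¹' Ω) (u ∘ Prod.swap) := by
  let e : (ℝ × ℝ) ≃L[ℝ] (ℝ × ℝ) := ContinuousLinearEquiv.prodComm ℝ ℝ ℝ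
  obtain ⟨hc, hconc, hfr, C, hC⟩ := hu
  refine ⟨hc.comp continuous_swap.continuousOn fun z hz => hz,
    hconc.comp_linearMap (e : (ℝ × ℝ) →ₗ[ℝ] (ℝ × ℝ)), ?_, C * ‖(e : (ℝ × ℝ) →L[ℝ] (ℝ × ℝ))‖, ?_⟩
  · intro z hz
    refine hfr _ ?_
    have := e.toHomeomorph.preimage_frontier Ω
    exact this.symm.subset hz
  · intro z hz g hg
    have hz' : e z ∈ interior Ω := (e.toHomeomorph.preimage_interior Ω).symm.subset hz
    have hg' : HasFDerivAt u (g ∘SL (e : (ℝ × ℝ) →L[ℝ] (ℝ × ℝ))) (e z) := by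
      have h := HasFDerivAt.comp (e z) (g := u ∘ Prod.swap) (f := e) (g' := g)
        (by simpa [e] using hg) e.hasFDerivAt
      exact h.congr_of_eventuallyEq (Filter.Eventually.of_forall fun w => by simp [e])
    have hgg : g = (g ∘SL (e : (ℝ × ℝ) →L[ℝ] (ℝ × ℝ))) ∘SL (e : (ℝ × ℝ) →L[ℝ] (ℝ × ℝ)) := by
      ext <;> simp [e]
    rw [hgg]
    refine (ContinuousLinearMap.opNorm_comp_le _ _).trans ?_
    gcongr
    exact hC _ hz' _ hg'

lemma L1N_ux_eq_swap (Ω : Set (ℝ × ℝ)) (u : ℝ × ℝ → ℝ) :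
    L1N Ω (ux u) = L1N (Prod.swap ⁻¹' Ω) (uy (u ∘ Prod.swap)) := by
  have h : ∀ z, uy (u ∘ Prod.swap) z = ux u z.swap := by
    intro z
    have := (ContinuousLinearEquiv.prodComm ℝ ℝ ℝ).comp_right_fderiv (f := u) (x := z)
    have h2 := DFunLike.congr_fun this ((0, 1) : ℝ × ℝ)
    exact h2
  simp only [L1N, h]
  exact (Measure.measurePreserving_swap.setIntegral_preimage_emb
    (MeasurableEquiv.prodComm (α := ℝ) (β := ℝ)).measurableEmbedding (fun z => |ux u z|) Ω).symm

lemma image_fst_preimage_swap (Ω : Set (ℝ × ℝ)) :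
    (fun z : ℝ × ℝ => z.1) '' (Prod.swap ⁻¹' Ω) = (fun z : ℝ × ℝ => z.2) '' Ω := by
  rw [← image_swap_eq_preimage_swap, image_image]
  rfl

lemma isCompact_preimage_swap {Ω : Set (ℝ × ℝ)} (hΩc : IsCompact Ω) :
    IsCompact (Prod.swap ⁻¹' Ω) := by
  rw [← image_swap_eq_preimage_swap]
  exact hΩc.image continuous_swap

/-- If `u ≥ h` at two points of `Ω` then `‖u_x‖₁` is at least twice the area of a trapezoid. -/
lemma MemU.le_L1N_ux {Ω : Set (ℝ × ℝ)} {u : ℝ × ℝ → ℝ} (hu : MemU Ω u) (hΩc : IsCompact Ω)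
    {c d : ℝ} (hproj : (fun z : ℝ × ℝ => z.2) '' Ω = Icc c d) {P Q : ℝ × ℝ} (hP : P ∈ Ω)
    (hQ : Q ∈ Ω) {h : ℝ} (hhP : h ≤ u P) (hhQ : h ≤ u Q) :
    h * ((d - c) + |Q.2 - P.2|) ≤ L1N Ω (ux u) := by
  rw [L1N_ux_eq_swap]
  exact hu.comp_swap.le_L1N_uy (isCompact_preimage_swap hΩc)
    ((image_fst_preimage_swap Ω).trans hproj) (P := P.swap) (Q := Q.swap) hP hQ hhP hhQ

/-- A piecewise affine upper bound for `u` in terms of the ordinate bounds `‖u_x‖₁`. -/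
lemma MemU.L1N_ux_le {Ω : Set (ℝ × ℝ)} {u : ℝ × ℝ → ℝ} (hu : MemU Ω u) (hΩc : IsCompact Ω)
    {c d : ℝ} (hproj : (fun z : ℝ × ℝ => z.2) '' Ω = Icc c d) {p k l k' l' : ℝ}
    (hp : p ∈ Icc c d) (hle : ∀ z ∈ Ω, z.2 ≤ p → u z ≤ k * z.2 + l)
    (hle' : ∀ z ∈ Ω, p ≤ z.2 → u z ≤ k' * z.2 + l') :
    L1N Ω (ux u) ≤ (p - c) * ((k * c + l) + (k * p + l)) +
      (d - p) * ((k' * p + l') + (k' * d + l')) := by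
  rw [L1N_ux_eq_swap]
  exact hu.comp_swap.L1N_uy_le (isCompact_preimage_swap hΩc)
    ((image_fst_preimage_swap Ω).trans hproj) hp (fun z hz => hle z.swap hz)
    fun z hz => hle' z.swap hz

lemma MemU.exists_isMaxOn_pos {Ω : Set (ℝ × ℝ)} {u : ℝ × ℝ → ℝ} (hu : MemU Ω u)
    (hΩc : IsCompact Ω) (hne : ∃ z ∈ Ω, u z ≠ 0) : ∃ P ∈ Ω, 0 < u P ∧ ∀ z ∈ Ω, u z ≤ u P := by
  obtain ⟨z, hz, hz0⟩ := hne
  obtain ⟨P, hP, hmax⟩ := hΩc.exists_isMaxOn ⟨z, hz⟩ hu.1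
  exact ⟨P, hP, ((hu.nonneg hΩc hz).lt_of_ne' hz0).trans_le (hmax hz), fun w hw => hmax hw⟩

/-- The bound `‖u_x‖₁ ≤ 2 (w_y / w_x) ‖u_y‖₁`, in quotient form. -/
lemma MemU.L1N_ux_div_L1N_uy_le {Ω : Set (ℝ × ℝ)} {u : ℝ × ℝ → ℝ} (hu : MemU Ω u)
    (hΩc : IsCompact Ω) (hne : ∃ z ∈ Ω, u z ≠ 0) {a b c d : ℝ} (hab : a < b) (hcd : c < d)
    (hprojx : (fun z : ℝ × ℝ => z.1) '' Ω = Icc a b)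
    (hprojy : (fun z : ℝ × ℝ => z.2) '' Ω = Icc c d) :
    L1N Ω (ux u) / L1N Ω (uy u) ≤ 2 * ((d - c) / (b - a)) := by
  obtain ⟨P, hP, hpos, hmax⟩ := hu.exists_isMaxOn_pos hΩc hne
  have h1 := hu.L1N_ux_le hΩc hprojy (left_mem_Icc.2 hcd.le) (k := 0) (l := u P) (k' := 0)
    (l' := u P) (fun z hz _ => by simpa using hmax z hz) fun z hz _ => by simpa using hmax z hz
  have h2 := hu.le_L1N_uy hΩc hprojx hP hP le_rfl le_rfl
  rw [sub_self, abs_zero, add_zero] at h2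
  have hba : 0 < b - a := sub_pos.2 hab
  rw [div_le_iff₀ ((mul_pos hpos hba).trans_le h2)]
  calc L1N Ω (ux u) ≤ 2 * (d - c) * u P := by linarith
    _ = 2 * ((d - c) / (b - a)) * (u P * (b - a)) := by field_simp
    _ ≤ _ := mul_le_mul_of_nonneg_left h2 (by have := sub_pos.2 hcd; positivity)

/-- If `Ω` contains no vertical segment of full height, the quotient `‖u_x‖₁ / ‖u_y‖₁` stays
uniformly below `2 w_y / w_x`. -/
lemma exists_lt_forall_L1N_ux_div_L1N_uy_le {Ω : Set (ℝ × ℝ)} (hΩc : IsCompact Ω)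
    (hΩconv : Convex ℝ Ω) {a b c d : ℝ} (hab : a < b) (hcd : c < d)
    (hprojx : (fun z : ℝ × ℝ => z.1) '' Ω = Icc a b)
    (hprojy : (fun z : ℝ × ℝ => z.2) '' Ω = Icc c d)
    (hseg : ¬ ∃ x₀ : ℝ, segment ℝ ((x₀, c) : ℝ × ℝ) (x₀, d) ⊆ Ω) :
    ∃ K, 0 ≤ K ∧ K < 2 * ((d - c) / (b - a)) ∧ ∀ u, MemU Ω u → (∃ z ∈ Ω, u z ≠ 0) →
      L1N Ω (ux u) / L1N Ω (uy u) ≤ K := by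
  have hmemy : ∀ z ∈ Ω, z.2 ∈ Icc c d := fun z hz => hprojy ▸ ⟨z, hz, rfl⟩
  have hΩne : Ω.Nonempty := by
    obtain ⟨z, hz, -⟩ : c ∈ (fun z : ℝ × ℝ => z.2) '' Ω := hprojy ▸ left_mem_Icc.2 hcd.le
    exact ⟨z, hz⟩
  obtain ⟨⟨z₁, z₂⟩, ⟨hz₁, hz₂⟩, hmin⟩ := (hΩc.prod hΩc).exists_isMinOn (hΩne.prod hΩne)
    (f := fun w => (d - w.1.2) + (w.2.2 - c) + |w.1.1 - w.2.1|) (by fun_prop)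
  set m := (d - z₁.2) + (z₂.2 - c) + |z₁.1 - z₂.1| with hm
  have hm_le : ∀ z ∈ Ω, ∀ w ∈ Ω, m ≤ (d - z.2) + (w.2 - c) + |z.1 - w.1| :=
    fun z hz w hw => hmin (show (z, w) ∈ Ω ×ˢ Ω from ⟨hz, hw⟩)
  have hmpos : 0 < m := by
    by_contra hle
    have h1 := (hmemy _ hz₁).2
    have h2 := (hmemy _ hz₂).1
    have h3 := abs_nonneg (z₁.1 - z₂.1)
    have e1 : z₁.2 = d := by linarith
    have e2 : z₂.2 = c := by linarith
    have e3 : z₁.1 = z₂.1 := sub_eq_zero.1 (abs_eq_zero.1 (by linarith))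
    refine hseg ⟨z₁.1, hΩconv.segment_subset ?_ ?_⟩
    · rwa [e3, ← e2]
    · rwa [← e1]
  have hba : 0 < b - a := sub_pos.2 hab
  have hdc : 0 < d - c := sub_pos.2 hcd
  set ε := min (m / 4) (d - c) with hε
  have hεpos : 0 < ε := lt_min (by positivity) hdc
  have hεm : ε ≤ m / 4 := min_le_left _ _
  have hεd : ε ≤ d - c := min_le_right _ _
  set η := (b - a + m / 4) / (b - a + m / 2) with hη
  have hηpos : 0 < η := by positivity
  have hη1 : η < 1 := by
    rw [hη, div_lt_one (by positivity)]
    linarith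
  have hεη : 0 < ε * (1 - η) := mul_pos hεpos (sub_pos.2 hη1)
  have hbd : ∀ s X Y A B : ℝ, 0 < s → 0 ≤ A → 0 < B → X ≤ A * s →
      s * B ≤ Y → X / Y ≤ A / B := by
    intro s X Y A B hs hA hB hX hY
    calc X / Y ≤ A * s / Y := by
          have := (mul_pos hs hB).trans_le hY
          gcongr
      _ ≤ A * s / (s * B) := by
          have := mul_pos hs hB
          gcongr
      _ = A / B := by field_simp
  refine ⟨max (2 * (d - c) / (b - a + m / 4)) (2 * (d - c - ε * (1 - η)) / (b - a)),
    le_max_of_le_left (by positivity), max_lt ?_ ?_, fun u hu hne => ?_⟩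
  · rw [← mul_div_assoc]
    gcongr
    linarith
  · rw [← mul_div_assoc]
    refine div_lt_div_of_pos_right ?_ hba
    linarith
  obtain ⟨P, hP, hpos, hmax⟩ := hu.exists_isMaxOn_pos hΩc hne
  have hlow := hu.le_L1N_uy hΩc hprojx hP hP le_rfl le_rfl
  rw [sub_self, abs_zero, add_zero] at hlow
  have hA : 0 ≤ 2 * (d - c - ε * (1 - η)) := by nlinarith
  by_cases htop : ∀ z ∈ Ω, d - ε ≤ z.2 → u z ≤ η * u P
  · refine le_max_of_le_right (hbd (u P) _ _ _ _ hpos hA hba ?_ hlow)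
    have := hu.L1N_ux_le hΩc hprojy (p := d - ε) ⟨by linarith, by linarith⟩ (k := 0) (l := u P)
      (k' := 0) (l' := η * u P) (fun z hz _ => by simpa using hmax z hz)
      fun z hz h => by simpa using htop z hz h
    linarith
  by_cases hbot : ∀ z ∈ Ω, z.2 ≤ c + ε → u z ≤ η * u P
  · refine le_max_of_le_right (hbd (u P) _ _ _ _ hpos hA hba ?_ hlow)
    have := hu.L1N_ux_le hΩc hprojy (p := c + ε) ⟨by linarith, by linarith⟩ (k := 0)
      (l := η * u P) (k' := 0) (l' := u P) (fun z hz h => by simpa using hbot z hz h)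
      fun z hz _ => by simpa using hmax z hz
    linarith
  push Not at htop hbot
  obtain ⟨z, hz, hzd, hzu⟩ := htop
  obtain ⟨w, hw, hwc, hwu⟩ := hbot
  refine le_max_of_le_left (hbd (u P) _ _ _ _ hpos (by positivity) (by positivity) ?_ ?_)
  · have := hu.L1N_ux_le hΩc hprojy (left_mem_Icc.2 hcd.le) (k := 0) (l := u P) (k' := 0)
      (l' := u P) (fun z hz _ => by simpa using hmax z hz) fun z hz _ => by simpa using hmax z hz
    linarith
  · refine le_trans ?_ (hu.le_L1N_uy hΩc hprojx hw hz hwu.le hzu.le)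
    have hΔ : m / 2 ≤ |z.1 - w.1| := by linarith [hm_le z hz w hw]
    calc u P * (b - a + m / 4) = η * u P * (b - a + m / 2) := by rw [hη]; field_simp
      _ ≤ _ := by gcongr

/-- The function `1 - gauge` vanishing on the frontier of a convex neighbourhood of `z₀`. -/
lemma exists_concave_lipschitz_bump {Ω : Set (ℝ × ℝ)} (hΩ : Convex ℝ Ω)
    {z₀ : ℝ × ℝ} (hz₀ : z₀ ∈ interior Ω) :
    ∃ v : ℝ × ℝ → ℝ, ConcaveOn ℝ univ v ∧ (∃ K, LipschitzWith K v) ∧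
      (∀ z ∈ frontier Ω, v z = 0) ∧
      ∀ z ∈ Ω, ∀ t ∈ Icc (0 : ℝ) 1, t ≤ v ((1 - t) • z + t • z₀) := by
  let e : (ℝ × ℝ) ≃ₜ (ℝ × ℝ) := Homeomorph.addRight z₀
  set S := e ⁻¹' Ω with hS
  have hSconv : Convex ℝ S := hΩ.translate_preimage_left z₀
  have hS0 : S ∈ nhds (0 : ℝ × ℝ) := by
    refine e.continuous.continuousAt.preimage_mem_nhds ?_
    simpa [e] using mem_interior_iff_mem_nhds.1 hz₀
  have hSabs : Absorbent ℝ S := absorbent_nhds_zero hS0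
  refine ⟨fun z => 1 - gauge S (z - z₀), ⟨convex_univ, ?_⟩, ?_, ?_, ?_⟩
  · intro z _ w _ p q hp hq hpq
    have hdec : p • z + q • w - z₀ = p • (z - z₀) + q • (w - z₀) := by
      have : z₀ = (p + q) • z₀ := by rw [hpq, one_smul]
      nth_rw 1 [this]
      module
    have := gauge_add_le hSconv hSabs (p • (z - z₀)) (q • (w - z₀))
    rw [gauge_smul_of_nonneg hp, gauge_smul_of_nonneg hq] at this
    simp only [hdec, smul_eq_mul] at this ⊢
    linarith
  · obtain ⟨K, hK⟩ := hSconv.lipschitz_gauge hS0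
    refine ⟨K, LipschitzWith.of_dist_le_mul fun z w => ?_⟩
    simpa only [dist_sub_left, dist_sub_right] using hK.dist_le_mul (z - z₀) (w - z₀)
  · intro z hz
    have : z - z₀ ∈ frontier S := by
      rw [hS, ← e.preimage_frontier]
      simpa [e] using hz
    simp [(gauge_eq_one_iff_mem_frontier hSconv hS0).2 this]
  · intro z hz t ht
    have hdec : (1 - t) • z + t • z₀ - z₀ = (1 - t) • (z - z₀) := by module
    have hg : gauge S (z - z₀) ≤ 1 := gauge_le_one_of_mem (by simpa [hS, e] using hz)
    have h1 : (0 : ℝ) ≤ 1 - t := sub_nonneg.2 ht.2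
    dsimp only
    rw [hdec, gauge_smul_of_nonneg h1, smul_eq_mul]
    linarith [mul_le_mul_of_nonneg_left hg h1]

/-- If `Ω` contains a vertical segment of full height, there are functions in `𝒰_Ω` whose quotient
`‖u_x‖₁ / ‖u_y‖₁` is arbitrarily close to `2 w_y / w_x`. -/
lemma exists_memU_of_segment_subset {Ω : Set (ℝ × ℝ)} (hΩc : IsCompact Ω)
    (hΩconv : Convex ℝ Ω) {z₀ : ℝ × ℝ} (hz₀ : z₀ ∈ interior Ω) {a b c d : ℝ} (hab : z₀.1 ∈ Ioo a b)
    (hcd : c < d) (hprojx : (fun z : ℝ × ℝ => z.1) '' Ω = Icc a b)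
    (hprojy : (fun z : ℝ × ℝ => z.2) '' Ω = Icc c d) {x₀ : ℝ}
    (hseg : segment ℝ ((x₀, c) : ℝ × ℝ) (x₀, d) ⊆ Ω) {t : ℝ} (ht : t ∈ Ioo (0 : ℝ) 1) :
    ∃ u, MemU Ω u ∧ (∃ z ∈ Ω, u z ≠ 0) ∧
      (2 - t) * ((d - c) / (b - a)) ≤ L1N Ω (ux u) / L1N Ω (uy u) := by
  obtain ⟨v, hvconc, ⟨K, hK⟩, hvfr, hvt⟩ := exists_concave_lipschitz_bump hΩconv hz₀
  have hmemx : ∀ z ∈ Ω, z.1 ∈ Icc a b := fun z hz => hprojx ▸ ⟨z, hz, rfl⟩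
  have hbot : (x₀, c) ∈ Ω := hseg (left_mem_segment ℝ _ _)
  have htop : (x₀, d) ∈ Ω := hseg (right_mem_segment ℝ _ _)
  have hx₀ : x₀ ∈ Icc a b := hmemx _ hbot
  have ht' : t ∈ Icc (0 : ℝ) 1 := ⟨ht.1.le, ht.2.le⟩
  have h1t : 0 < 1 - t := sub_pos.2 ht.2
  set x₁ := (1 - t) * x₀ + t * z₀.1 with hx₁
  have hax : 0 < x₁ - a := by nlinarith [hx₀.1, hab.1, ht.1]
  have hxb : 0 < b - x₁ := by nlinarith [hx₀.2, hab.2, ht.1]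
  let P : ℝ × ℝ := (1 - t) • (x₀, c) + t • z₀
  let Q : ℝ × ℝ := (1 - t) • (x₀, d) + t • z₀
  have hP : P ∈ Ω := hΩconv hbot (interior_subset hz₀) h1t.le ht.1.le (by ring)
  have hQ : Q ∈ Ω := hΩconv htop (interior_subset hz₀) h1t.le ht.1.le (by ring)
  let u : ℝ × ℝ → ℝ := fun z =>
    min (min ((x₁ - a)⁻¹ * (z.1 - a)) ((b - x₁)⁻¹ * (b - z.1))) (t⁻¹ * v z)
  have hval : ∀ z : ℝ × ℝ, z.1 = x₁ → t ≤ v z → 1 ≤ u z := by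
    intro z hz hv
    simp only [u, hz]
    rw [inv_mul_cancel₀ hax.ne', inv_mul_cancel₀ hxb.ne', min_self]
    refine le_min le_rfl ?_
    rw [inv_mul_eq_div, le_div_iff₀ ht.1, one_mul]
    exact hv
  have huP : 1 ≤ u P := hval P (by simp [P, hx₁]) (hvt _ hbot t ht')
  have huQ : 1 ≤ u Q := hval Q (by simp [Q, hx₁]) (hvt _ htop t ht')
  have hconc : ConcaveOn ℝ univ u := by
    refine ConcaveOn.inf (ConcaveOn.inf ⟨convex_univ, ?_⟩ ⟨convex_univ, ?_⟩)
      (hvconc.smul (inv_nonneg.2 ht.1.le))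
    · intro z _ w _ p q _ _ hpq
      simp only [smul_eq_mul, Prod.fst_add, Prod.smul_fst]
      exact le_of_eq (by linear_combination (-(x₁ - a)⁻¹ * a) * hpq)
    · intro z _ w _ p q _ _ hpq
      simp only [smul_eq_mul, Prod.fst_add, Prod.smul_fst]
      exact le_of_eq (by linear_combination ((b - x₁)⁻¹ * b) * hpq)
  have hlip : ∃ K, LipschitzWith K u := by
    have hfst : LipschitzWith 1 fun z : ℝ × ℝ => z.1 := LipschitzWith.prod_fst
    have hl1 : ∃ K, LipschitzWith K fun z : ℝ × ℝ => (x₁ - a)⁻¹ * (z.1 - a) := ⟨_,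
      (lipschitzWith_smul (x₁ - a)⁻¹).comp (hfst.sub (LipschitzWith.const a))⟩
    have hl2 : ∃ K, LipschitzWith K fun z : ℝ × ℝ => (b - x₁)⁻¹ * (b - z.1) := ⟨_,
      (lipschitzWith_smul (b - x₁)⁻¹).comp ((LipschitzWith.const b).sub hfst)⟩
    obtain ⟨K₁, hK₁⟩ := hl1
    obtain ⟨K₂, hK₂⟩ := hl2
    exact ⟨_, (hK₁.min hK₂).min ((lipschitzWith_smul t⁻¹).comp hK)⟩
  obtain ⟨L, hL⟩ := hlip
  have hu : MemU Ω u := by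
    refine ⟨hL.continuous.continuousOn, hconc.subset (subset_univ _) hΩconv, fun z hz => ?_, L,
      fun z _ g hg => hg.le_of_lipschitz hL⟩
    have hzab := hmemx z (hΩc.isClosed.frontier_subset hz)
    simp only [u, hvfr z hz, mul_zero]
    exact min_eq_right (le_min (mul_nonneg (inv_nonneg.2 hax.le) (sub_nonneg.2 hzab.1))
      (mul_nonneg (inv_nonneg.2 hxb.le) (sub_nonneg.2 hzab.2)))
  refine ⟨u, hu, ⟨P, hP, (zero_lt_one.trans_le huP).ne'⟩, ?_⟩
  have hdc : 0 < d - c := sub_pos.2 hcd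
  have hba : 0 < b - a := by linarith
  have hlow := hu.le_L1N_ux hΩc hprojy hP hQ huP huQ
  have hlow' := hu.le_L1N_uy hΩc hprojx hP hQ huP huQ
  have hPQ : Q.2 - P.2 = (1 - t) * (d - c) := by
    simp only [P, Q, Prod.snd_add, Prod.smul_snd, smul_eq_mul]
    ring
  rw [hPQ, abs_of_pos (mul_pos h1t hdc)] at hlow
  have hupp := hu.L1N_uy_le hΩc hprojx (p := x₁) ⟨by linarith, by linarith⟩
    (k := (x₁ - a)⁻¹) (l := -((x₁ - a)⁻¹ * a)) (k' := -(b - x₁)⁻¹) (l' := (b - x₁)⁻¹ * b)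
    (fun z _ _ => ((min_le_left _ _).trans (min_le_left _ _)).trans_eq (by ring))
    (fun z _ _ => ((min_le_left _ _).trans (min_le_right _ _)).trans_eq (by ring))
  have hsum : (x₁ - a) * ((x₁ - a)⁻¹ * a + -((x₁ - a)⁻¹ * a) +
      ((x₁ - a)⁻¹ * x₁ + -((x₁ - a)⁻¹ * a))) + (b - x₁) * (-(b - x₁)⁻¹ * x₁ + (b - x₁)⁻¹ * b +
      (-(b - x₁)⁻¹ * b + (b - x₁)⁻¹ * b)) = b - a := by
    field_simp
    ring
  rw [hsum] at hupp
  have hYpos : 0 < L1N Ω (uy u) := by linarith [abs_nonneg (Q.1 - P.1)]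
  rw [← mul_div_assoc]
  exact div_le_div₀ (by linarith [mul_pos h1t hdc]) (by linarith) hYpos hupp

/-- Theorem 1, equality case: the supremum of `‖u_x‖₁ / ‖u_y‖₁` over nonzero
`u ∈ 𝒰_Ω` equals `2 w_y / w_x` iff `Ω` contains a vertical segment whose endpoints lie on
the two horizontal sides of the circumscribed axis-parallel rectangle. -/
theorem stmt_5 (Ω : Set (ℝ × ℝ)) (hΩc : IsCompact Ω) (hΩconv : Convex ℝ Ω)
    (hΩint : (interior Ω).Nonempty)
    (a b c d : ℝ)
    (hprojx : (fun z : ℝ × ℝ => z.1) '' Ω = Icc a b)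
    (hprojy : (fun z : ℝ × ℝ => z.2) '' Ω = Icc c d) :
    sSup {r : ℝ | ∃ u : ℝ × ℝ → ℝ, MemU Ω u ∧ (∃ z ∈ Ω, u z ≠ 0) ∧
        r = L1N Ω (ux u) / L1N Ω (uy u)} = 2 * ((d - c) / (b - a)) ↔
      ∃ x₀ : ℝ, segment ℝ ((x₀, c) : ℝ × ℝ) (x₀, d) ⊆ Ω := by
  obtain ⟨z₀, hz₀⟩ := hΩint
  have hx : z₀.1 ∈ Ioo a b := by
    rw [← interior_Icc, ← hprojx]
    exact interior_maximal (image_mono interior_subset)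
      (isOpenMap_fst _ isOpen_interior) (mem_image_of_mem _ hz₀)
  have hy : z₀.2 ∈ Ioo c d := by
    rw [← interior_Icc, ← hprojy]
    exact interior_maximal (image_mono interior_subset)
      (isOpenMap_snd _ isOpen_interior) (mem_image_of_mem _ hz₀)
  have hab : a < b := hx.1.trans hx.2
  have hcd : c < d := hy.1.trans hy.2
  constructor
  · intro hsup
    by_contra hseg
    obtain ⟨K, hK0, hKlt, hK⟩ :=
      exists_lt_forall_L1N_ux_div_L1N_uy_le hΩc hΩconv hab hcd hprojx hprojy hseg
    refine (hsup ▸ hKlt).not_ge (Real.sSup_le ?_ hK0)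
    rintro r ⟨u, hu, hne, rfl⟩
    exact hK u hu hne
  · rintro ⟨x₀, hseg⟩
    have hq : 0 < (d - c) / (b - a) := div_pos (sub_pos.2 hcd) (sub_pos.2 hab)
    have hex := fun t ht => exists_memU_of_segment_subset hΩc hΩconv hz₀ hx hcd hprojx hprojy
      hseg (t := t) ht
    refine csSup_eq_of_forall_le_of_forall_lt_exists_gt ?_ ?_ ?_
    · obtain ⟨u, hu, hne, -⟩ := hex (1 / 2) (by norm_num)
      exact ⟨_, u, hu, hne, rfl⟩
    · rintro r ⟨u, hu, hne, rfl⟩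
      exact hu.L1N_ux_div_L1N_uy_le hΩc hne hab hcd hprojx hprojy
    · intro w hw
      have hw' : w / ((d - c) / (b - a)) < 2 := by rwa [div_lt_iff₀ hq]
      obtain ⟨s, hs, hs2⟩ := exists_between (max_lt hw' (one_lt_two : (1 : ℝ) < 2))
      obtain ⟨u, hu, hne, hle⟩ := hex (2 - s)
        ⟨by linarith, by linarith [(le_max_right _ _).trans_lt hs]⟩
      refine ⟨_, ⟨u, hu, hne, rfl⟩, lt_of_lt_of_le ?_ hle⟩
      rw [sub_sub_cancel, ← div_lt_iff₀ hq]
      exact (le_max_left _ _).trans_lt hs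
end
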